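/- For every polytope P of dimension d ≥ 2: g_2(P) + f_1(P) − f_0(P) ≥ (d+1)(d−2)/2, where f_0(P) and f_1(P) are the numbers of vertices and edges of P and g_2(P) is the toric g-number. -/

import Mathlib

open Classical Polynomial

section PolytopeDefs

variable {V : Type*} [AddCommGroup V] [Module ℝ V]

/-- A polytope: the convex hull of finitely many points. -/
def IsPolytope (P : Set V) : Prop := ∃ S : Finset V, P = convexHull ℝ (S : Set V)

/-- Faces of a polytope (or of a cone): the set itself, the empty face, and the
sets of maximizers of linear functionals (equivalently, intersections with
supporting hyperplanes). -/
def IsFace (P F : Set V) : Prop :=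
  F = P ∨ F = ∅ ∨ ∃ l : V →ₗ[ℝ] ℝ, F = {x | x ∈ P ∧ ∀ y ∈ P, l y ≤ l x}

/-- Dimension of a polytope: the dimension of its affine span, with the
convention `pdim ∅ = -1`. -/
noncomputable def pdim (P : Set V) : ℤ :=
  if P = ∅ then -1 else (Module.finrank ℝ (affineSpan ℝ P).direction : ℤ)

/-- The `g`-truncation: from the toric `h`-polynomial of a `d`-dimensional
polytope to its toric `g`-polynomial, via `g_k = h_k - h_{k-1}` for
`0 ≤ k ≤ d/2`, with `h_{-1} = 0`. -/
noncomputable def truncG (d : ℤ) (h : Polynomial ℚ) : Polynomial ℚ :=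
  ∑ k ∈ Finset.range (d.toNat / 2 + 1),
    Polynomial.C (h.coeff k - if k = 0 then 0 else h.coeff (k - 1)) * Polynomial.X ^ k

/-- Fuelled recursion computing the toric `h`-polynomial of the interval `[F,G]`
of a face lattice (with `F` playing the role of the empty face):
`h([F,G],t) = ∑_{F ≤ G' < G} g([F,G'],t) · (t-1)^{dim G - dim G' - 1}`. -/
noncomputable def relHAux : ℕ → Set V → Set V → Polynomial ℚ
  | 0, _, _ => 1
  | n + 1, F, G =>
      if G = F then 1
      else ∑ᶠ G' ∈ {G' : Set V | IsFace G G' ∧ F ⊆ G' ∧ G' ≠ G},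
        truncG (pdim G' - pdim F - 1) (relHAux n F G') *
          (Polynomial.X - 1) ^ (pdim G - pdim G' - 1).toNat

/-- The toric `h`-polynomial of the interval `[F,G]` in a face lattice. -/
noncomputable def relH (F G : Set V) : Polynomial ℚ := relHAux (pdim G + 1).toNat F G

/-- The toric `g`-polynomial of the interval `[F,G]` in a face lattice;
`relG F P` is the polynomial `g(P/F, t)`. -/
noncomputable def relG (F G : Set V) : Polynomial ℚ :=
  truncG (pdim G - pdim F - 1) (relH F G)

/-- The toric `h`-polynomial `h(P,t)` of a polytope `P`. -/
noncomputable def toricH (P : Set V) : Polynomial ℚ := relH ∅ P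

/-- The toric `g`-polynomial `g(P,t)` of a polytope `P`. -/
noncomputable def toricG (P : Set V) : Polynomial ℚ := relG ∅ P

end PolytopeDefs

/-!
Place the polytope at height one and work with the cone over it, whose faces are encoded by the
generators they contain; for cones the Euler relation follows by comparing faces through the ratio
of two linear functionals.

For `d ≥ 4`, palindromicity of the toric `h`-polynomial lets `g₂` be read off the *top* coefficients
of the toric recursion, where only faces of dimension at most two contribute:
`g₂ = (d + 1) d / 2 - d f₀ + f₁ + ∑ (f₀(F) - 3)`, summed over the `2`-faces `F`. As
`∑ (deg v - d) = 2 f₁ - d f₀`, summed over the vertices `v`, the claim becomes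
`f₀ ≤ d + 1 + ∑ (deg v - d) + ∑ (f₀(F) - 3)`. To see this, exhaust the vertices along edges of the
graph and count the vertices of all `2`-faces met so far. When `v` is added next to an earlier
vertex, the edge between them lies in at least `d - 1` of those `2`-faces, so at least `d` edges
at `v` are already covered. The new vertices are therefore at most `deg v - d` further neighbours
of `v`, and for each new `2`-face `F` at most `f₀(F) - 3` vertices not adjacent to `v` in `F`.

For `d ≤ 3` the number `g₂` vanishes and `deg v ≥ d` suffices.
-/

open scoped Finset

section ConeFaces

variable {ι W : Type*} [AddCommGroup W] [Module ℝ W] {p : ι → W}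
  {a b l : W →ₗ[ℝ] ℝ} {T A B C N : Finset ι} {k : ℕ}

/-! ### Faces of finitely generated cones -/

/-- The functional `l` exposes `A` as a face of the cone generated by the vectors `p t`, `t ∈ T`:
it is nonnegative on the generators and vanishes precisely on those indexed by `A`.
Faces are encoded throughout by the index sets of the generators they contain. -/
structure Exposes (p : ι → W) (l : W →ₗ[ℝ] ℝ) (T A : Finset ι) : Prop where
  subset : A ⊆ T
  eq_zero : ∀ t ∈ A, l (p t) = 0
  pos : ∀ t ∈ T, t ∉ A → 0 < l (p t)

/-- `A` is the index set of a face of the cone generated by the vectors `p t`, `t ∈ T`. -/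
def IsConeFace (p : ι → W) (T A : Finset ι) : Prop :=
  ∃ l : W →ₗ[ℝ] ℝ, Exposes p l T A

/-- The dimension of the linear span of the vectors `p t`, `t ∈ A`. For the cone over a polytope
this is one more than the dimension of the polytope. -/
noncomputable def coneRank (p : ι → W) (A : Finset ι) : ℕ :=
  Module.finrank ℝ (Submodule.span ℝ (p '' (A : Set ι)))

theorem Exposes.nonneg (h : Exposes p l T A) {t : ι} (ht : t ∈ T) : 0 ≤ l (p t) := by
  by_cases htA : t ∈ A
  · exact (h.eq_zero t htA).ge
  · exact (h.pos t ht htA).le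

theorem Exposes.mem_of_eq_zero (h : Exposes p l T A) {t : ι} (ht : t ∈ T) (h0 : l (p t) = 0) :
    t ∈ A := by
  by_contra htA
  exact (h.pos t ht htA).ne' h0

theorem Exposes.inter_right (h : Exposes p l T A) (hB : B ⊆ T) : Exposes p l B (A ∩ B) where
  subset := Finset.inter_subset_right
  eq_zero t ht := h.eq_zero t (Finset.mem_inter.1 ht).1
  pos t ht htA := h.pos t (hB ht) fun hA => htA (Finset.mem_inter.2 ⟨hA, ht⟩)

theorem Exposes.mono (h : Exposes p l T A) (hAB : A ⊆ B) (hB : B ⊆ T) : Exposes p l B A :=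
  Finset.inter_eq_left.2 hAB ▸ h.inter_right hB

theorem Exposes.add (ha : Exposes p a T A) (hb : Exposes p b T B) :
    Exposes p (a + b) T (A ∩ B) where
  subset := Finset.inter_subset_left.trans ha.subset
  eq_zero t ht := by
    rw [Finset.mem_inter] at ht
    rw [LinearMap.add_apply, ha.eq_zero t ht.1, hb.eq_zero t ht.2, add_zero]
  pos t ht htAB := by
    rw [LinearMap.add_apply]
    by_cases htA : t ∈ A
    · exact add_pos_of_nonneg_of_pos (ha.nonneg ht)
        (hb.pos t ht fun htB => htAB (Finset.mem_inter.2 ⟨htA, htB⟩))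
    · exact add_pos_of_pos_of_nonneg (ha.pos t ht htA) (hb.nonneg ht)

theorem Exposes.exists_smul_add (ha : Exposes p a T A) (hb : Exposes p b A B) :
    ∃ c : ℝ, Exposes p (c • a + b) T B := by
  have large : ∀ᶠ c : ℝ in Filter.atTop, ∀ t ∈ T \ A, 0 < c * a (p t) + b (p t) := by
    refine (Filter.eventually_all_finset _).2 fun t ht => ?_
    rw [Finset.mem_sdiff] at ht
    exact (Filter.tendsto_atTop_add_const_right _ _
      (Filter.tendsto_id.atTop_mul_const (ha.pos t ht.1 ht.2))).eventually_gt_atTop 0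
  obtain ⟨c, hc⟩ := large.exists
  refine ⟨c, hb.subset.trans ha.subset, fun t ht => ?_, fun t ht htB => ?_⟩
  · simp [ha.eq_zero t (hb.subset ht), hb.eq_zero t ht]
  · by_cases htA : t ∈ A
    · simpa [ha.eq_zero t htA] using hb.pos t htA htB
    · simpa using hc t (Finset.mem_sdiff.2 ⟨ht, htA⟩)

theorem Exposes.of_eqOn_smul (ha : Exposes p a T A) (hAN : A ⊆ N) (hN : N ⊆ T) {c : ℝ}
    (hc : 0 < c) (h : ∀ t ∈ N, l (p t) = c * a (p t)) : Exposes p l N A where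
  subset := hAN
  eq_zero t ht := by rw [h t (hAN ht), ha.eq_zero t ht, mul_zero]
  pos t ht htA := h t ht ▸ mul_pos hc (ha.pos t (hN ht) htA)

theorem Exposes.exists_minRatio (ha : Exposes p a T A) (hne : A ≠ T)
    (hl : ∀ t ∈ A, l (p t) = 0) :
    ∃ (c : ℝ) (N : Finset ι), Exposes p (l - c • a) T N ∧ A ⊂ N := by
  have hU : (T \ A).Nonempty :=
    Finset.sdiff_nonempty.2 fun hTA => hne (ha.subset.antisymm hTA)
  obtain ⟨x, hx, hmin⟩ := (T \ A).exists_min_image (fun t => l (p t) / a (p t)) hU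
  rw [Finset.mem_sdiff] at hx
  set c := l (p x) / a (p x)
  have hle : ∀ t ∈ T, c * a (p t) ≤ l (p t) := fun t ht => by
    by_cases htA : t ∈ A
    · rw [hl t htA, ha.eq_zero t htA, mul_zero]
    · exact (le_div_iff₀ (ha.pos t ht htA)).1 (hmin t (Finset.mem_sdiff.2 ⟨ht, htA⟩))
  refine ⟨c, T.filter fun t => l (p t) = c * a (p t), ⟨Finset.filter_subset _ _, ?_, ?_⟩,
    Finset.ssubset_iff_of_subset ?_ |>.2 ⟨x, ?_, hx.2⟩⟩
  · intro t ht
    simpa using sub_eq_zero.2 (Finset.mem_filter.1 ht).2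
  · intro t ht htN
    have hne : l (p t) ≠ c * a (p t) := fun h => htN (Finset.mem_filter.2 ⟨ht, h⟩)
    simpa using lt_of_le_of_ne (hle t ht) hne.symm
  · intro t ht
    exact Finset.mem_filter.2 ⟨ha.subset ht, by rw [hl t ht, ha.eq_zero t ht, mul_zero]⟩
  · exact Finset.mem_filter.2 ⟨hx.1, (div_mul_cancel₀ _ (ha.pos x hx.1 hx.2).ne').symm⟩

theorem Exposes.exists_maxRatio (ha : Exposes p a T A) (hl : ∀ t ∈ A, l (p t) = 0) {x : ι}
    (hx : x ∈ T) (hlx : 0 < l (p x)) :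
    ∃ (c : ℝ) (N : Finset ι), 0 < c ∧ Exposes p (c • a - l) T N ∧ A ⊂ N := by
  have hne : A ≠ T := by rintro rfl; exact hlx.ne' (hl x hx)
  obtain ⟨c, N, hN, hAN⟩ := ha.exists_minRatio (l := -l) hne (by simpa using hl)
  replace hN : Exposes p (-c • a - l) T N := (by module : -l - c • a = -c • a - l) ▸ hN
  have hle : l (p x) ≤ -c * a (p x) := by simpa using hN.nonneg hx
  exact ⟨-c, N, pos_of_mul_pos_left (hlx.trans_le hle) (ha.nonneg hx), hN, hAN⟩

theorem Exposes.eq_smul_of_mem {c : ℝ} (h : Exposes p (c • a - l) T A) {t : ι} (ht : t ∈ A) :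
    l (p t) = c * a (p t) :=
  (sub_eq_zero.1 (h.eq_zero t ht)).symm

namespace IsConeFace

theorem subset (h : IsConeFace p T A) : A ⊆ T :=
  h.choose_spec.subset

theorem refl (p : ι → W) (T : Finset ι) : IsConeFace p T T :=
  ⟨0, subset_rfl, fun _ _ => rfl, fun _ ht htT => absurd ht htT⟩

theorem inter_right (h : IsConeFace p T A) (hB : B ⊆ T) : IsConeFace p B (A ∩ B) :=
  let ⟨l, hl⟩ := h; ⟨l, hl.inter_right hB⟩

theorem mono (h : IsConeFace p T A) (hAB : A ⊆ B) (hB : B ⊆ T) : IsConeFace p B A :=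
  let ⟨l, hl⟩ := h; ⟨l, hl.mono hAB hB⟩

theorem inter (hA : IsConeFace p T A) (hB : IsConeFace p T B) : IsConeFace p T (A ∩ B) :=
  let ⟨a, ha⟩ := hA; let ⟨b, hb⟩ := hB; ⟨a + b, ha.add hb⟩

theorem trans (hA : IsConeFace p T A) (hB : IsConeFace p A B) : IsConeFace p T B :=
  let ⟨_, ha⟩ := hA; let ⟨_, hb⟩ := hB; let ⟨_, hc⟩ := ha.exists_smul_add hb; ⟨_, hc⟩

theorem empty_of_isConeFace (hT : IsConeFace p T ∅) (hA : IsConeFace p T A) : IsConeFace p A ∅ :=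
  hT.mono (Finset.empty_subset _) hA.subset

end IsConeFace

/-! ### Rank -/

instance finiteDimensional_span_image_coe (A : Finset ι) :
    FiniteDimensional ℝ (Submodule.span ℝ (p '' (A : Set ι))) :=
  FiniteDimensional.span_of_finite ℝ (A.finite_toSet.image p)

theorem coneRank_mono (h : A ⊆ B) : coneRank p A ≤ coneRank p B :=
  Submodule.finrank_mono (Submodule.span_mono (Set.image_mono (Finset.coe_subset.2 h)))

@[simp]
theorem coneRank_empty : coneRank p ∅ = 0 := by
  rw [coneRank, Finset.coe_empty, Set.image_empty, Submodule.span_empty, finrank_bot]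

theorem coneRank_union_le (A R : Finset ι) : coneRank p (A ∪ R) ≤ coneRank p A + #R := by
  have hR : coneRank p R ≤ #R := by
    rw [coneRank, ← Finset.coe_image]
    exact (finrank_span_finset_le_card _).trans Finset.card_image_le
  rw [coneRank, Finset.coe_union, Set.image_union, Submodule.span_union]
  exact (Submodule.finrank_add_le_finrank_add_finrank _ _).trans (Nat.add_le_add_left hR _)

theorem coneRank_le_of_forall_vanish
    (h : ∀ l : W →ₗ[ℝ] ℝ, (∀ t ∈ B, l (p t) = 0) → ∀ t ∈ T, l (p t) = 0) :
    coneRank p T ≤ coneRank p B := by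
  refine Submodule.finrank_mono (Submodule.span_le.2 ?_)
  rintro _ ⟨t, ht, rfl⟩
  by_contra hmem
  obtain ⟨l, hlt, hl⟩ := Submodule.exists_le_ker_of_notMem hmem
  exact hlt (h l (fun s hs => hl (Submodule.subset_span ⟨s, hs, rfl⟩)) t ht)

theorem IsConeFace.coneRank_lt (h : IsConeFace p T A) (hAT : A ≠ T) :
    coneRank p A < coneRank p T := by
  obtain ⟨l, hl⟩ := h
  obtain ⟨t, ht, htA⟩ := Finset.exists_of_ssubset (hl.subset.ssubset_of_ne hAT)
  refine Submodule.finrank_lt_finrank_of_lt (SetLike.lt_iff_le_and_exists.2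
    ⟨Submodule.span_mono (Set.image_mono (Finset.coe_subset.2 hl.subset)), p t,
      Submodule.subset_span ⟨t, ht, rfl⟩, fun hmem => (hl.pos t ht htA).ne' ?_⟩)
  have hker : Submodule.span ℝ (p '' (A : Set ι)) ≤ LinearMap.ker l := by
    rw [Submodule.span_le]
    rintro _ ⟨s, hs, rfl⟩
    exact hl.eq_zero s hs
  exact hker hmem

theorem IsConeFace.eq_of_coneRank_le (h : IsConeFace p T A) (hr : coneRank p T ≤ coneRank p A) :
    A = T :=
  of_not_not fun hne => (h.coneRank_lt hne).not_ge hr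

theorem IsConeFace.eq_of_subset_of_coneRank_le (hA : IsConeFace p T A) (hB : IsConeFace p T B)
    (hAB : A ⊆ B) (hr : coneRank p B ≤ coneRank p A) : A = B :=
  (hA.mono hAB hB.subset).eq_of_coneRank_le hr

theorem IsConeFace.exists_between (hA : IsConeFace p T A)
    (hr : coneRank p A + 1 < coneRank p T) :
    ∃ N, IsConeFace p T N ∧ A ⊂ N ∧ N ⊂ T := by
  obtain ⟨a, ha⟩ := hA
  have hne : A ≠ T := by rintro rfl; omega
  obtain ⟨x, hx, hxA⟩ := Finset.exists_of_ssubset (ha.subset.ssubset_of_ne hne)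
  have hrank : coneRank p (A ∪ {x}) < coneRank p T :=
    (coneRank_union_le A {x}).trans_lt (by simpa using hr)
  obtain ⟨l, hl, y, hy, hly⟩ : ∃ l : W →ₗ[ℝ] ℝ,
      (∀ t ∈ A ∪ {x}, l (p t) = 0) ∧ ∃ t ∈ T, l (p t) ≠ 0 := by
    by_contra! hall
    exact hrank.not_ge (coneRank_le_of_forall_vanish hall)
  obtain ⟨c, N, hN, hAN⟩ :=
    ha.exists_minRatio hne fun t ht => hl t (Finset.mem_union_left _ ht)
  refine ⟨N, ⟨_, hN⟩, hAN, hN.subset.ssubset_of_ne ?_⟩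
  rintro rfl
  have hprop : ∀ t ∈ N, l (p t) = c * a (p t) := fun t ht => by
    simpa [sub_eq_zero] using hN.eq_zero t ht
  have hc : c = 0 := by
    have hlx := hprop x hx
    rw [hl x (by simp)] at hlx
    exact (mul_eq_zero.1 hlx.symm).resolve_right (ha.pos x hx hxA).ne'
  exact hly (by rw [hprop y hy, hc, zero_mul])

theorem IsConeFace.exists_exposes (hA : IsConeFace p T A) (hl : ∀ t ∈ A, l (p t) = 0) {x : ι}
    (hx : x ∈ T) (hlx : 0 < l (p x)) :
    ∃ N, IsConeFace p T N ∧ A ⊂ N ∧ Exposes p l N A := by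
  obtain ⟨a, ha⟩ := hA
  obtain ⟨c, N, hc, hN, hAN⟩ := ha.exists_maxRatio hl hx hlx
  exact ⟨N, ⟨_, hN⟩, hAN,
    ha.of_eqOn_smul hAN.subset hN.subset hc fun t ht => hN.eq_smul_of_mem ht⟩

theorem IsConeFace.exists_exposes_coneRank_succ (hA : IsConeFace p T A)
    (hl : ∀ t ∈ A, l (p t) = 0) {x : ι} (hx : x ∈ T) (hlx : 0 < l (p x)) :
    ∃ B, IsConeFace p T B ∧ Exposes p l B A ∧ coneRank p B = coneRank p A + 1 := by
  obtain ⟨N, hN, hAN, hlN⟩ := hA.exists_exposes hl hx hlx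
  obtain ⟨B, ⟨hB, hAB, hlB⟩, hmin⟩ := WellFounded.has_min (wellFounded_lt (α := Finset ι))
    {N | IsConeFace p T N ∧ A ⊂ N ∧ Exposes p l N A} ⟨N, hN, hAN, hlN⟩
  refine ⟨B, hB, hlB, ?_⟩
  have hAB' : IsConeFace p B A := ⟨l, hlB⟩
  by_contra hr
  obtain ⟨M, hM, hAM, hMB⟩ := hAB'.exists_between
    (lt_of_le_of_ne (hAB'.coneRank_lt hAB.ne) (Ne.symm hr))
  exact hmin M ⟨hB.trans hM, hAM, hlB.mono hAM.subset hM.subset⟩ hMB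

/-! ### Face numbers -/

/-- The faces of the cone generated by the vectors `p t`, `t ∈ T`, as a finset of index sets. -/
noncomputable def coneFaces (p : ι → W) (T : Finset ι) : Finset (Finset ι) :=
  T.powerset.filter (IsConeFace p T)

/-- The faces of rank `k`; for the cone over a polytope these correspond to the
`(k - 1)`-dimensional faces, so ranks `1`, `2`, `3` are vertices, edges and `2`-faces. -/
noncomputable def facesOfRank (p : ι → W) (T : Finset ι) (k : ℕ) : Finset (Finset ι) :=
  (coneFaces p T).filter (coneRank p · = k)

/-- The faces of rank `k` containing `A`. -/
noncomputable def facesAbove (p : ι → W) (T A : Finset ι) (k : ℕ) : Finset (Finset ι) :=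
  (facesOfRank p T k).filter (A ⊆ ·)

theorem mem_coneFaces : A ∈ coneFaces p T ↔ IsConeFace p T A := by
  simp only [coneFaces, Finset.mem_filter, Finset.mem_powerset, and_iff_right_iff_imp]
  exact IsConeFace.subset

theorem mem_facesOfRank : A ∈ facesOfRank p T k ↔ IsConeFace p T A ∧ coneRank p A = k := by
  rw [facesOfRank, Finset.mem_filter, mem_coneFaces]

theorem mem_facesAbove :
    B ∈ facesAbove p T A k ↔ (IsConeFace p T B ∧ coneRank p B = k) ∧ A ⊆ B := by
  rw [facesAbove, Finset.mem_filter, mem_facesOfRank]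

theorem IsConeFace.isConeFace_iff (hB : IsConeFace p T B) :
    IsConeFace p B C ↔ IsConeFace p T C ∧ C ⊆ B :=
  ⟨fun h => ⟨hB.trans h, h.subset⟩, fun h => h.1.mono h.2 hB.subset⟩

theorem IsConeFace.mem_facesOfRank_iff (hB : IsConeFace p T B) :
    C ∈ facesOfRank p B k ↔ C ∈ facesOfRank p T k ∧ C ⊆ B := by
  rw [mem_facesOfRank, mem_facesOfRank, hB.isConeFace_iff, and_right_comm]

theorem IsConeFace.coneRank_le_add_card_facesAbove (hA : IsConeFace p T A) :
    coneRank p T ≤ coneRank p A + #(facesAbove p T A (coneRank p A + 1)) := by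
  set covers := facesAbove p T A (coneRank p A + 1)
  have hrep : ∀ B ∈ covers, ∃ x ∈ B, x ∉ A := fun B hB => by
    rw [mem_facesAbove] at hB
    refine Finset.not_subset.1 fun hBA => ?_
    have := coneRank_mono (p := p) hBA
    omega
  choose r hr hrA using hrep
  set reps := covers.attach.image fun B => r B.1 B.2
  have hpos : ∀ l : W →ₗ[ℝ] ℝ, (∀ t ∈ A ∪ reps, l (p t) = 0) →
      ∀ t ∈ T, ¬ 0 < l (p t) := fun l hl t ht hlt => by
    obtain ⟨B, hB, hlB, hrank⟩ := hA.exists_exposes_coneRank_succ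
      (fun s hs => hl s (Finset.mem_union_left _ hs)) ht hlt
    have hBc : B ∈ covers := mem_facesAbove.2 ⟨⟨hB, hrank⟩, hlB.subset⟩
    exact (hlB.pos _ (hr B hBc) (hrA B hBc)).ne' (hl _ (Finset.mem_union_right _
      (Finset.mem_image.2 ⟨⟨B, hBc⟩, Finset.mem_attach _ _, rfl⟩)))
  calc coneRank p T ≤ coneRank p (A ∪ reps) :=
        coneRank_le_of_forall_vanish fun l hl t ht => le_antisymm (not_lt.1 (hpos l hl t ht)) <| by
          simpa using hpos (-l) (by simpa using hl) t ht
    _ ≤ coneRank p A + #reps := coneRank_union_le _ _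
    _ ≤ coneRank p A + #covers :=
        Nat.add_le_add_left (Finset.card_image_le.trans Finset.card_attach.le) _

/-! ### The Euler relation -/

/-- The signed count of the faces `B` in which `l` exposes `A`. Geometrically this is an Euler
characteristic of the part of the quotient by `A` on which `l` is positive. -/
noncomputable def eulerSum (p : ι → W) (T A : Finset ι) (l : W →ₗ[ℝ] ℝ) : ℤ :=
  ∑ B ∈ (coneFaces p T).filter (Exposes p l · A), (-1) ^ coneRank p B

/-- The faces properly containing `A` on which `l` is a positive multiple of `a`. -/
noncomputable def ratioFaces (p : ι → W) (a l : W →ₗ[ℝ] ℝ) (T A : Finset ι) :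
    Finset (Finset ι) :=
  (coneFaces p T).filter fun N => A ⊂ N ∧ ∃ c : ℝ, 0 < c ∧ ∀ t ∈ N, l (p t) = c * a (p t)

theorem mem_ratioFaces : N ∈ ratioFaces p a l T A ↔
    IsConeFace p T N ∧ A ⊂ N ∧ ∃ c : ℝ, 0 < c ∧ ∀ t ∈ N, l (p t) = c * a (p t) := by
  rw [ratioFaces, Finset.mem_filter, mem_coneFaces]

theorem Exposes.smul (h : Exposes p l T A) {c : ℝ} (hc : 0 < c) : Exposes p (c • l) T A :=
  h.of_eqOn_smul h.subset subset_rfl hc fun _ _ => rfl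

theorem Exposes.unique (hA : Exposes p l T A) (hB : Exposes p l T B) : A = B :=
  Finset.Subset.antisymm
    (fun t ht => hB.mem_of_eq_zero (hA.subset ht) (hA.eq_zero t ht))
    (fun t ht => hA.mem_of_eq_zero (hB.subset ht) (hB.eq_zero t ht))

theorem Exposes.ratio_le (ha : Exposes p a T A) (hB : B ⊆ T) {c c' : ℝ} {N' : Finset ι}
    (hN : Exposes p (l - c • a) B N) (hN' : Exposes p (l - c' • a) B N') (hAN : A ⊂ N) :
    c' ≤ c := by
  obtain ⟨x, hx, hxA⟩ := Finset.exists_of_ssubset hAN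
  have hlx : l (p x) = c * a (p x) := sub_eq_zero.1 (hN.eq_zero x hx)
  have hle : c' * a (p x) ≤ l (p x) := sub_nonneg.1 (hN'.nonneg (hN.subset hx))
  exact le_of_mul_le_mul_right (hlx ▸ hle) (ha.pos x (hB (hN.subset hx)) hxA)

theorem Exposes.exists_mem_ratioFaces (ha : Exposes p a T A) (hB : IsConeFace p T B)
    (hl : Exposes p l B A) (hne : A ≠ B) :
    ∃ c : ℝ, ∃ N ∈ ratioFaces p a l T A, Exposes p (l - c • a) B N := by
  obtain ⟨c, N, hN, hAN⟩ := (ha.mono hl.subset hB.subset).exists_minRatio hne hl.eq_zero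
  have hprop : ∀ t ∈ N, l (p t) = c * a (p t) := fun t ht => sub_eq_zero.1 (hN.eq_zero t ht)
  obtain ⟨x, hx, hxA⟩ := Finset.exists_of_ssubset hAN
  have hc : 0 < c := pos_of_mul_pos_left (hprop x hx ▸ hl.pos x (hN.subset hx) hxA)
    (ha.nonneg (hB.subset (hN.subset hx)))
  exact ⟨c, N, mem_ratioFaces.2 ⟨hB.trans ⟨_, hN⟩, hAN, c, hc, hprop⟩, hN⟩

theorem Exposes.eq_ratio (ha : Exposes p a T A) (hN : N ⊆ T) (hAN : A ⊂ N) {c c' : ℝ}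
    (hc : ∀ t ∈ N, l (p t) = c * a (p t)) (hc' : ∀ t ∈ N, l (p t) = c' * a (p t)) : c = c' := by
  obtain ⟨x, hx, hxA⟩ := Finset.exists_of_ssubset hAN
  exact mul_right_cancel₀ (ha.pos x (hN hx) hxA).ne' ((hc x hx).symm.trans (hc' x hx))

theorem Exposes.of_exposes_sub_smul (ha : Exposes p a T A) (hB : B ⊆ T) (hAN : A ⊆ N) {c : ℝ}
    (hc : 0 < c) (hN : Exposes p (l - c • a) B N) : Exposes p l B A := by
  have h := ((ha.mono (hAN.trans hN.subset) hB).smul hc).add hN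
  rwa [add_sub_cancel, Finset.inter_eq_left.2 hAN] at h

-- Every `B ≠ A` on the left is assigned the face of `B` on which the ratio `l / a` is smallest.
theorem filter_exposes_eq_insert_biUnion (ha : Exposes p a T A) {c : Finset ι → ℝ}
    (hc : ∀ N ∈ ratioFaces p a l T A, 0 < c N ∧ ∀ t ∈ N, l (p t) = c N * a (p t))
    (hl : ∀ t ∈ A, l (p t) = 0) :
    (coneFaces p T).filter (Exposes p l · A) = insert A ((ratioFaces p a l T A).biUnion fun N =>
      (coneFaces p T).filter (Exposes p (l - c N • a) · N)) := by
  ext B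
  simp only [Finset.mem_filter, Finset.mem_insert, Finset.mem_biUnion, mem_coneFaces]
  constructor
  · rintro ⟨hB, hlB⟩
    refine or_iff_not_imp_left.2 fun hne => ?_
    obtain ⟨c', N, hN, hNB⟩ := ha.exists_mem_ratioFaces hB hlB (Ne.symm hne)
    have hcc : c N = c' := ha.eq_ratio (mem_ratioFaces.1 hN).1.subset (mem_ratioFaces.1 hN).2.1
      (hc N hN).2 fun t ht => sub_eq_zero.1 (hNB.eq_zero t ht)
    exact ⟨N, hN, hB, hcc ▸ hNB⟩
  · rintro (rfl | ⟨N, hN, hB, hNB⟩)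
    · exact ⟨⟨a, ha⟩, subset_rfl, hl, fun t ht htB => absurd ht htB⟩
    · exact ⟨hB, ha.of_exposes_sub_smul hB.subset (mem_ratioFaces.1 hN).2.1.subset
        (hc N hN).1 hNB⟩

theorem eulerSum_eq_add_sum_ratioFaces (ha : Exposes p a T A) {c : Finset ι → ℝ}
    (hc : ∀ N ∈ ratioFaces p a l T A, 0 < c N ∧ ∀ t ∈ N, l (p t) = c N * a (p t))
    (hl : ∀ t ∈ A, l (p t) = 0) :
    eulerSum p T A l =
      (-1) ^ coneRank p A + ∑ N ∈ ratioFaces p a l T A, eulerSum p T N (l - c N • a) := by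
  rw [eulerSum, filter_exposes_eq_insert_biUnion ha hc hl, Finset.sum_insert, Finset.sum_biUnion]
  · rfl
  · intro N hN N' hN' hne
    refine Finset.disjoint_left.2 fun B hB hB' => hne ?_
    simp only [Finset.mem_filter, mem_coneFaces] at hB hB'
    have hcc : c N = c N' := le_antisymm
      (ha.ratio_le hB.1.subset hB'.2 hB.2 (mem_ratioFaces.1 hN').2.1)
      (ha.ratio_le hB.1.subset hB.2 hB'.2 (mem_ratioFaces.1 hN).2.1)
    exact hB.2.unique (hcc ▸ hB'.2)
  · simp only [Finset.mem_biUnion, Finset.mem_filter, not_exists, not_and]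
    exact fun N hN _ hNA => (mem_ratioFaces.1 hN).2.1.not_subset hNA.subset

theorem eulerSum_eq_of_nonpos (hA : IsConeFace p T A) (hl : ∀ t ∈ A, l (p t) = 0)
    (hl' : ∀ t ∈ T, l (p t) ≤ 0) : eulerSum p T A l = (-1) ^ coneRank p A := by
  have hfilter : (coneFaces p T).filter (Exposes p l · A) = {A} := by
    refine Finset.eq_singleton_iff_unique_mem.2 ⟨?_, fun B hB => ?_⟩
    · exact Finset.mem_filter.2
        ⟨mem_coneFaces.2 hA, subset_rfl, hl, fun t ht htA => absurd ht htA⟩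
    · rw [Finset.mem_filter, mem_coneFaces] at hB
      refine Finset.Subset.antisymm (fun t ht => ?_) hB.2.subset
      by_contra htA
      exact (hB.2.pos t ht htA).not_ge (hl' t (hB.1.subset ht))
  rw [eulerSum, hfilter, Finset.sum_singleton]

theorem Exposes.eulerSum_eq (hl : Exposes p l T A) :
    eulerSum p T A l = ∑ B ∈ (coneFaces p T).filter (A ⊆ ·), (-1) ^ coneRank p B := by
  refine Finset.sum_congr (Finset.filter_congr fun B hB => ?_) fun _ _ => rfl
  exact ⟨Exposes.subset, fun hAB => hl.mono hAB (mem_coneFaces.1 hB).subset⟩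

theorem filter_ratioFaces_subset {c : ℝ} (hc : 0 < c)
    (hN : Exposes p (c • a - l) T N) :
    (ratioFaces p a l T A).filter (· ⊆ N) = ((coneFaces p N).filter (A ⊆ ·)).erase A := by
  have hNT : IsConeFace p T N := ⟨_, hN⟩
  ext B
  simp only [Finset.mem_filter, Finset.mem_erase, mem_ratioFaces, mem_coneFaces,
    hNT.isConeFace_iff]
  constructor
  · rintro ⟨⟨hB, hAB, -⟩, hBN⟩
    exact ⟨hAB.ne', ⟨hB, hBN⟩, hAB.subset⟩
  · rintro ⟨hne, ⟨hB, hBN⟩, hAB⟩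
    exact ⟨⟨hB, hAB.ssubset_of_ne hne.symm, c, hc, fun t ht => hN.eq_smul_of_mem (hBN ht)⟩, hBN⟩

theorem eulerSum_eq_zero_of_maxRatio (ha : Exposes p a T A) (hl : ∀ t ∈ A, l (p t) = 0) {c : ℝ}
    (hc : 0 < c) (hN : Exposes p (c • a - l) T N) (hAN : A ⊂ N)
    (hsub : eulerSum p N A a = 0)
    (hquot : ∀ M, IsConeFace p T M → A ⊂ M → ∀ m : W →ₗ[ℝ] ℝ, (∀ t ∈ M, m (p t) = 0) →
      (∃ t ∈ T, 0 < m (p t)) → eulerSum p T M m = 0) :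
    eulerSum p T A l = 0 := by
  choose! ratio hratio using fun M (hM : M ∈ ratioFaces p a l T A) => (mem_ratioFaces.1 hM).2.2
  have hterm : ∀ M ∈ ratioFaces p a l T A, eulerSum p T M (l - ratio M • a) =
      if M ⊆ N then (-1) ^ coneRank p M else 0 := fun M hM => by
    obtain ⟨hMT, hAM, -⟩ := mem_ratioFaces.1 hM
    have hvanish : ∀ t ∈ M, (l - ratio M • a) (p t) = 0 := fun t ht =>
      sub_eq_zero.2 ((hratio M hM).2 t ht)
    split_ifs with hMN
    · have hcM : ratio M = c := ha.eq_ratio hMT.subset hAM (hratio M hM).2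
        fun t ht => hN.eq_smul_of_mem (hMN ht)
      exact eulerSum_eq_of_nonpos hMT hvanish fun t ht => by
        simpa [hcM] using hN.nonneg ht
    · obtain ⟨y, hyM, hyN⟩ := Finset.not_subset.1 hMN
      have hyT := hMT.subset hyM
      have hlt : ratio M * a (p y) < c * a (p y) := by
        simpa [(hratio M hM).2 y hyM] using hN.pos y hyT hyN
      obtain ⟨x, hx, hxA⟩ := Finset.exists_of_ssubset hAN
      refine hquot M hMT hAM _ hvanish ⟨x, hN.subset hx, ?_⟩
      have hxy := mul_lt_mul_of_pos_right (lt_of_mul_lt_mul_right hlt (ha.nonneg hyT))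
        (ha.pos x (hN.subset hx) hxA)
      simpa [hN.eq_smul_of_mem hx] using hxy
  rw [eulerSum_eq_add_sum_ratioFaces ha hratio hl, Finset.sum_congr rfl hterm,
    ← Finset.sum_filter, filter_ratioFaces_subset hc hN,
    Finset.add_sum_erase _ fun M => (-1 : ℤ) ^ coneRank p M,
    ← (ha.mono hAN.subset hN.subset).eulerSum_eq, hsub]
  exact Finset.mem_filter.2
    ⟨mem_coneFaces.2 (IsConeFace.mono ⟨a, ha⟩ hAN.subset hN.subset), subset_rfl⟩

theorem Exposes.eulerSum_eq_zero_of_coneRank_eq (ha : Exposes p a T A)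
    (hr : coneRank p T = coneRank p A + 1) : eulerSum p T A a = 0 := by
  have hA : IsConeFace p T A := ⟨a, ha⟩
  have hne : A ≠ T := by rintro rfl; omega
  have hfilter : (coneFaces p T).filter (A ⊆ ·) = {A, T} := by
    ext B
    simp only [Finset.mem_filter, mem_coneFaces, Finset.mem_insert, Finset.mem_singleton]
    constructor
    · rintro ⟨hB, hAB⟩
      refine or_iff_not_imp_left.2 fun hBA => hB.eq_of_coneRank_le ?_
      exact hr ▸ (hA.mono hAB hB.subset).coneRank_lt (Ne.symm hBA)
    · rintro (rfl | rfl)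
      · exact ⟨hA, subset_rfl⟩
      · exact ⟨.refl p B, ha.subset⟩
  rw [ha.eulerSum_eq, hfilter, Finset.sum_pair hne, hr, pow_succ]
  ring

theorem Exposes.exists_not_proportional (ha : Exposes p a T A)
    (hr : coneRank p A + 1 < coneRank p T) :
    ∃ b, Exposes p b T A ∧ ∀ c : ℝ, ¬ ∀ t ∈ T, b (p t) = c * a (p t) := by
  obtain ⟨N, ⟨n, hn⟩, hAN, hNT⟩ := IsConeFace.exists_between ⟨a, ha⟩ hr
  refine ⟨a + n, Finset.inter_eq_left.2 hAN.subset ▸ ha.add hn, fun c hprop => ?_⟩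
  obtain ⟨x, hx, hxA⟩ := Finset.exists_of_ssubset hAN
  obtain ⟨y, hy, hyN⟩ := Finset.exists_of_ssubset hNT
  have hc : (1 : ℝ) = c := mul_right_cancel₀ (ha.pos x (hn.subset hx) hxA).ne' <| by
    simpa [hn.eq_zero x hx] using hprop x (hn.subset hx)
  have hny : n (p y) = 0 := by simpa [← hc] using hprop y hy
  exact (hn.pos y hy hyN).ne' hny

theorem eulerSum_eq_zero (hA : IsConeFace p T A) (hl : ∀ t ∈ A, l (p t) = 0)
    (hpos : ∃ t ∈ T, 0 < l (p t)) : eulerSum p T A l = 0 := by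
  induction hn : #T - #A using Nat.strong_induction_on generalizing T A l with
  | _ n ih =>
  obtain ⟨a, ha⟩ := hA
  have hnonprop : ∀ l : W →ₗ[ℝ] ℝ, (∀ t ∈ A, l (p t) = 0) → (∃ t ∈ T, 0 < l (p t)) →
      (∀ c : ℝ, ¬ ∀ t ∈ T, l (p t) = c * a (p t)) → eulerSum p T A l = 0 := by
    rintro l hl ⟨x, hx, hlx⟩ hprop
    obtain ⟨c, N, hc, hN, hAN⟩ := ha.exists_maxRatio hl hx hlx
    have hNT : N ≠ T := by rintro rfl; exact hprop c fun t ht => hN.eq_smul_of_mem ht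
    obtain ⟨y, hy, hyA⟩ := Finset.exists_of_ssubset hAN
    refine eulerSum_eq_zero_of_maxRatio ha hl hc hN hAN ?_ fun M hM hAM m hm hmpos => ?_
    · have hAN' := Finset.card_lt_card hAN
      have hNT' := Finset.card_lt_card (hN.subset.ssubset_of_ne hNT)
      exact ih _ (by omega) ⟨a, ha.mono hAN.subset hN.subset⟩ ha.eq_zero
        ⟨y, hy, ha.pos y (hN.subset hy) hyA⟩ rfl
    · have hAM' := Finset.card_lt_card hAM
      have hMT := Finset.card_le_card hM.subset
      exact ih _ (by omega) hM hm hmpos rfl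
  by_cases hprop : ∃ c : ℝ, ∀ t ∈ T, l (p t) = c * a (p t)
  swap
  · exact hnonprop l hl hpos (not_exists.1 hprop)
  obtain ⟨c, hc⟩ := hprop
  obtain ⟨x, hx, hlx⟩ := hpos
  have hlA : Exposes p l T A := ha.of_eqOn_smul ha.subset subset_rfl
    (pos_of_mul_pos_left (hc x hx ▸ hlx) (ha.nonneg hx)) hc
  rcases (Nat.succ_le_of_lt (IsConeFace.coneRank_lt ⟨a, ha⟩
    (by rintro rfl; exact hlx.ne' (hl x hx)))).eq_or_lt with hr | hr
  · exact hlA.eulerSum_eq_zero_of_coneRank_eq hr.symm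
  · obtain ⟨b, hb, hbprop⟩ := ha.exists_not_proportional hr
    rw [hlA.eulerSum_eq, ← hb.eulerSum_eq]
    exact hnonprop b hb.eq_zero ⟨x, hx, hb.pos x hx fun hxA => hlx.ne' (hl x hxA)⟩ hbprop

theorem IsConeFace.sum_neg_one_pow_coneRank (hA : IsConeFace p T A) (hne : A ≠ T) :
    ∑ B ∈ (coneFaces p T).filter (A ⊆ ·), (-1 : ℤ) ^ coneRank p B = 0 := by
  obtain ⟨a, ha⟩ := hA
  obtain ⟨t, ht, htA⟩ := Finset.exists_of_ssubset (ha.subset.ssubset_of_ne hne)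
  rw [← ha.eulerSum_eq]
  exact eulerSum_eq_zero ⟨a, ha⟩ ha.eq_zero ⟨t, ht, ha.pos t ht htA⟩

/-! ### Faces of low rank -/

theorem IsConeFace.mem_facesAbove_iff (hB : IsConeFace p T B) :
    C ∈ facesAbove p B A k ↔ C ∈ facesAbove p T A k ∧ C ⊆ B := by
  rw [facesAbove, facesAbove, Finset.mem_filter, Finset.mem_filter, hB.mem_facesOfRank_iff,
    and_right_comm]

theorem coneRank_pos (hA : IsConeFace p A ∅) (hne : A.Nonempty) : 0 < coneRank p A :=
  coneRank_empty (p := p) ▸ hA.coneRank_lt hne.ne_empty.symm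

theorem eq_of_nonempty_of_coneRank_eq_one (hB : IsConeFace p B ∅) (hr : coneRank p B = 1)
    (hA : IsConeFace p B A) (hne : A.Nonempty) : A = B :=
  hA.eq_of_coneRank_le (hr ▸ coneRank_pos (hB.empty_of_isConeFace hA) hne)

theorem facesOfRank_zero (hT : IsConeFace p T ∅) : facesOfRank p T 0 = {∅} := by
  refine Finset.eq_singleton_iff_unique_mem.2
    ⟨mem_facesOfRank.2 ⟨hT, coneRank_empty⟩, fun B hB => ?_⟩
  rw [mem_facesOfRank] at hB
  exact (hT.eq_of_subset_of_coneRank_le hB.1 (Finset.empty_subset _) (by simp [hB.2])).symm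

theorem empty_mem_facesOfRank_zero (hT : IsConeFace p T ∅) : ∅ ∈ facesOfRank p T 0 :=
  facesOfRank_zero hT ▸ Finset.mem_singleton_self ∅

theorem facesOfRank_coneRank (p : ι → W) (T : Finset ι) : facesOfRank p T (coneRank p T) = {T} :=
  Finset.eq_singleton_iff_unique_mem.2 ⟨mem_facesOfRank.2 ⟨.refl p T, rfl⟩,
    fun _ hB => (mem_facesOfRank.1 hB).1.eq_of_coneRank_le (mem_facesOfRank.1 hB).2.ge⟩

theorem not_subset_of_mem_facesOfRank (hA : A ∈ facesOfRank p T k) (hB : B ∈ facesOfRank p T k)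
    (hne : A ≠ B) : ¬ A ⊆ B := by
  rw [mem_facesOfRank] at hA hB
  exact fun hAB => hne (hA.1.eq_of_subset_of_coneRank_le hB.1 hAB (hB.2.trans hA.2.symm).le)

theorem coneRank_le_add_card_facesAbove (hA : A ∈ facesOfRank p T k) :
    coneRank p T ≤ k + #(facesAbove p T A (k + 1)) := by
  obtain ⟨hAT, rfl⟩ := mem_facesOfRank.1 hA
  exact hAT.coneRank_le_add_card_facesAbove

theorem facesAbove_nonempty (hA : A ∈ facesOfRank p T k) (hk : k < coneRank p T) :
    (facesAbove p T A (k + 1)).Nonempty := by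
  have := coneRank_le_add_card_facesAbove hA
  exact Finset.card_pos.1 (by omega)

theorem exists_mem_facesAbove_ne (hA : A ∈ facesOfRank p T k) (hk : k + 1 < coneRank p T)
    (B : Finset ι) : ∃ B' ∈ facesAbove p T A (k + 1), B' ≠ B := by
  have := coneRank_le_add_card_facesAbove hA
  exact Finset.exists_mem_ne (by omega) B

theorem eq_of_mem_facesAbove_of_subset {D : Finset ι} (hC : C ∈ facesOfRank p T k)
    (hD : D ∈ facesOfRank p T k) (hne : D ≠ C) (hA : A ∈ facesAbove p T C (k + 1))
    (hB : B ∈ facesAbove p T C (k + 1)) (hDA : D ⊆ A) (hDB : D ⊆ B) : A = B := by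
  obtain ⟨⟨hAT, hAk⟩, hCA⟩ := mem_facesAbove.1 hA
  obtain ⟨⟨hBT, hBk⟩, hCB⟩ := mem_facesAbove.1 hB
  have hI := hAT.inter hBT
  have hCI : C ≠ A ∩ B := by
    rintro rfl
    exact not_subset_of_mem_facesOfRank hD hC hne (Finset.subset_inter hDA hDB)
  have hlt : k < coneRank p (A ∩ B) := (mem_facesOfRank.1 hC).2 ▸
    ((mem_facesOfRank.1 hC).1.mono (Finset.subset_inter hCA hCB) hI.subset).coneRank_lt hCI
  exact (hI.eq_of_subset_of_coneRank_le hAT Finset.inter_subset_left (hAk ▸ hlt)).symm.trans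
    (hI.eq_of_subset_of_coneRank_le hBT Finset.inter_subset_right (hBk ▸ hlt))

theorem card_facesOfRank_one_ge (hT : IsConeFace p T ∅) :
    coneRank p T ≤ #(facesOfRank p T 1) := by
  simpa [facesAbove] using coneRank_le_add_card_facesAbove (empty_mem_facesOfRank_zero hT)

theorem facesOfRank_one_nonempty (hT : IsConeFace p T ∅) (hr : 0 < coneRank p T) :
    (facesOfRank p T 1).Nonempty :=
  Finset.card_pos.1 (hr.trans_le (card_facesOfRank_one_ge hT))

theorem euler_poincare (hT : IsConeFace p T ∅) (hr : 0 < coneRank p T) :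
    ∑ k ∈ Finset.range (coneRank p T + 1), (-1 : ℤ) ^ k * #(facesOfRank p T k) = 0 := by
  have hne : ∅ ≠ T := by rintro rfl; simp at hr
  have hrange : ∀ B ∈ coneFaces p T, coneRank p B ∈ Finset.range (coneRank p T + 1) := fun B hB =>
    Finset.mem_range_succ_iff.2 (coneRank_mono (mem_coneFaces.1 hB).subset)
  have heuler := hT.sum_neg_one_pow_coneRank hne
  rw [Finset.filter_true_of_mem fun B _ => Finset.empty_subset B,
    ← Finset.sum_fiberwise_of_maps_to hrange] at heuler
  rw [← heuler]
  refine Finset.sum_congr rfl fun k _ => ?_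
  rw [Finset.sum_congr rfl fun B hB => by rw [(Finset.mem_filter.1 hB).2], Finset.sum_const,
    nsmul_eq_mul, mul_comm]
  rfl

theorem card_facesOfRank_one_of_coneRank_eq_two (hT : IsConeFace p T ∅)
    (hr : coneRank p T = 2) : #(facesOfRank p T 1) = 2 := by
  have heuler := euler_poincare hT (by omega)
  have htop : facesOfRank p T 2 = {T} := hr ▸ facesOfRank_coneRank p T
  simp only [hr, Finset.sum_range_succ, Finset.sum_range_zero, facesOfRank_zero hT, htop,
    Finset.card_singleton] at heuler
  omega

theorem exists_mem_facesOfRank_one_ne (hT : IsConeFace p T ∅) {e : Finset ι}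
    (he : e ∈ facesOfRank p T 2) (u : Finset ι) :
    ∃ v ∈ facesOfRank p T 1, v ⊆ e ∧ v ≠ u := by
  obtain ⟨heT, hr⟩ := mem_facesOfRank.1 he
  have hcard := card_facesOfRank_one_of_coneRank_eq_two (hT.empty_of_isConeFace heT) hr
  obtain ⟨v, hv, hvu⟩ := Finset.exists_mem_ne (by omega : 1 < #(facesOfRank p e 1)) u
  rw [heT.mem_facesOfRank_iff] at hv
  exact ⟨v, hv.1, hv.2, hvu⟩

theorem sum_card_facesAbove_two (hT : IsConeFace p T ∅) :
    ∑ v ∈ facesOfRank p T 1, #(facesAbove p T v 2) = 2 * #(facesOfRank p T 2) := by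
  have hends : ∀ e ∈ facesOfRank p T 2, #((facesOfRank p T 1).bipartiteBelow (· ⊆ ·) e) = 2 := by
    intro e he
    obtain ⟨heT, hr⟩ := mem_facesOfRank.1 he
    rw [← card_facesOfRank_one_of_coneRank_eq_two (hT.empty_of_isConeFace heT) hr]
    congr 1
    ext v
    rw [heT.mem_facesOfRank_iff, Finset.bipartiteBelow, Finset.mem_filter]
  calc ∑ v ∈ facesOfRank p T 1, #(facesAbove p T v 2)
      = ∑ e ∈ facesOfRank p T 2, #((facesOfRank p T 1).bipartiteBelow (· ⊆ ·) e) :=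
        Finset.sum_card_bipartiteAbove_eq_sum_card_bipartiteBelow _
    _ = 2 * #(facesOfRank p T 2) := by
        rw [Finset.sum_congr rfl hends, Finset.sum_const, smul_eq_mul, mul_comm]

/-! ### Connectedness of the graph -/

theorem nonempty_of_mem_facesOfRank_succ (hA : A ∈ facesOfRank p T (k + 1)) : A.Nonempty :=
  Finset.nonempty_iff_ne_empty.2 fun h => by simpa [h] using (mem_facesOfRank.1 hA).2

theorem exists_mem_minRatio (ha : Exposes p a T ∅) {S : Finset (Finset ι)}
    (hS : S ⊆ facesOfRank p T 1) (hne : S.Nonempty) (b : W →ₗ[ℝ] ℝ) :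
    ∃ u ∈ S, ∃ c : ℝ, (∀ t ∈ u, b (p t) = c * a (p t)) ∧
      ∀ v ∈ S, ∀ t ∈ v, c * a (p t) ≤ b (p t) := by
  have hface : ∀ u ∈ S, IsConeFace p T u := fun u hu => (mem_facesOfRank.1 (hS hu)).1
  set U := S.biUnion id
  have hU : ∀ u ∈ S, u ⊆ U := fun u hu => Finset.subset_biUnion_of_mem id hu
  have hUT : U ⊆ T := Finset.biUnion_subset.2 fun u hu => (hface u hu).subset
  obtain ⟨u₀, hu₀⟩ := hne
  have hUne : U.Nonempty := (nonempty_of_mem_facesOfRank_succ (hS hu₀)).mono (hU u₀ hu₀)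
  obtain ⟨c, N, hN, hNne⟩ := (ha.mono (Finset.empty_subset U) hUT).exists_minRatio
    hUne.ne_empty.symm (l := b) (by simp)
  obtain ⟨x, hx⟩ := Finset.empty_ssubset.1 hNne
  obtain ⟨u, hu, hxu⟩ := Finset.mem_biUnion.1 (hN.subset hx)
  have huN : N ∩ u = u := eq_of_nonempty_of_coneRank_eq_one
    (IsConeFace.empty_of_isConeFace ⟨a, ha⟩ (hface u hu)) (mem_facesOfRank.1 (hS hu)).2
    ⟨_, hN.inter_right (hU u hu)⟩ ⟨x, Finset.mem_inter.2 ⟨hx, hxu⟩⟩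
  exact ⟨u, hu, c,
    fun t ht => sub_eq_zero.1 (hN.eq_zero t (Finset.inter_eq_right.1 huN ht)),
    fun v hv t ht => sub_nonneg.1 (hN.nonneg (hU v hv ht))⟩

-- As in the simplex algorithm: a vertex of `S` minimizing `b / a` has a neighbour with a smaller
-- ratio, where `a` exposes the apex and `b` exposes `w`.
theorem exists_edge_leaving (hT : IsConeFace p T ∅) {S : Finset (Finset ι)}
    (hS : S ⊆ facesOfRank p T 1) (hne : S.Nonempty) {w : Finset ι} (hw : w ∈ facesOfRank p T 1)
    (hwS : w ∉ S) :
    ∃ u ∈ S, ∃ v ∈ facesOfRank p T 1, v ∉ S ∧ ∃ e ∈ facesOfRank p T 2, u ⊆ e ∧ v ⊆ e := by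
  obtain ⟨a, ha⟩ := id hT
  obtain ⟨⟨b, hb⟩, -⟩ := mem_facesOfRank.1 hw
  obtain ⟨u, hu, c, hbu, hmin⟩ := exists_mem_minRatio ha hS hne b
  obtain ⟨huT, hur⟩ := mem_facesOfRank.1 (hS hu)
  have hc : 0 < c := by
    obtain ⟨z, hz, hzw⟩ := Finset.not_subset.1
      (not_subset_of_mem_facesOfRank (hS hu) hw fun h => hwS (h ▸ hu))
    exact pos_of_mul_pos_left (hbu z hz ▸ hb.pos z (huT.subset hz) hzw)
      (ha.nonneg (huT.subset hz))
  obtain ⟨y, hy⟩ := nonempty_of_mem_facesOfRank_succ hw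
  have hy' : 0 < (c • a - b) (p y) := by
    simpa [hb.eq_zero y hy] using mul_pos hc (ha.pos y (hb.subset hy) (Finset.notMem_empty y))
  obtain ⟨e, heT, hue, her⟩ := huT.exists_exposes_coneRank_succ
    (fun t ht => sub_eq_zero.2 (hbu t ht).symm) (hb.subset hy) hy'
  have he : e ∈ facesOfRank p T 2 := mem_facesOfRank.2 ⟨heT, by rw [her, hur]⟩
  obtain ⟨v, hv, hve, hvu⟩ := exists_mem_facesOfRank_one_ne hT he u
  refine ⟨u, hu, v, hv, fun hvS => ?_, e, he, hue.subset, hve⟩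
  obtain ⟨z, hz, hzu⟩ := Finset.not_subset.1 (not_subset_of_mem_facesOfRank hv (hS hu) hvu)
  exact (sub_pos.1 (hue.pos z (hve hz) hzu)).not_ge (hmin v hvS z hz)

theorem facesOfRank_one_induction (hT : IsConeFace p T ∅) (hr : 0 < coneRank p T)
    {P : Finset (Finset ι) → Prop} (singleton : ∀ v ∈ facesOfRank p T 1, P {v})
    (insert : ∀ S : Finset (Finset ι), ∀ u ∈ S, ∀ v ∈ facesOfRank p T 1, v ∉ S →
      ∀ e ∈ facesOfRank p T 2, u ⊆ e → v ⊆ e → P S → P (insert v S)) :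
    P (facesOfRank p T 1) := by
  obtain ⟨v₀, hv₀⟩ := facesOfRank_one_nonempty hT hr
  obtain ⟨S, hS, hmax⟩ := Finset.exists_max_image
    ((facesOfRank p T 1).powerset.filter fun S => S.Nonempty ∧ P S) Finset.card
    ⟨{v₀}, by simpa [hv₀] using singleton v₀ hv₀⟩
  obtain ⟨hST, hne, hP⟩ := by simpa only [Finset.mem_filter, Finset.mem_powerset] using hS
  rcases hST.eq_or_ssubset with rfl | hST'
  · exact hP
  obtain ⟨w, hw, hwS⟩ := Finset.exists_of_ssubset hST'
  obtain ⟨u, hu, v, hv, hvS, e, he, hue, hve⟩ := exists_edge_leaving hT hST hne hw hwS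
  have hle := hmax (Insert.insert v S) (by
    simpa [Finset.insert_subset_iff, hv, hST] using insert S u hu v hv hvS e he hue hve hP)
  rw [Finset.card_insert_of_notMem hvS] at hle
  omega

/-! ### Growing the vertex set along edges -/

/-- The excess of the degree of the vertex `v` over its minimal value `coneRank p T - 1`. -/
noncomputable def vertexExcess (p : ι → W) (T v : Finset ι) : ℤ :=
  #(facesAbove p T v 2) + 1 - coneRank p T

/-- The excess of the number of vertices of the `2`-face `F` over that of a triangle. -/
noncomputable def faceExcess (p : ι → W) (F : Finset ι) : ℤ :=
  #(facesOfRank p F 1) - 3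

/-- The vertices of the `2`-face `F` that do not lie on an edge of `F` through `v`. -/
noncomputable def farVertices (p : ι → W) (F v : Finset ι) : Finset (Finset ι) :=
  (facesOfRank p F 1).filter fun x => ∀ e ∈ facesAbove p F v 2, ¬ x ⊆ e

/-- The `2`-faces containing a vertex of `S`. -/
noncomputable def twoFacesMeeting (p : ι → W) (T : Finset ι) (S : Finset (Finset ι)) :
    Finset (Finset ι) :=
  S.biUnion (facesAbove p T · 3)

/-- The vertices of the `2`-faces containing a vertex of `S`. -/
noncomputable def starVertices (p : ι → W) (T : Finset ι) (S : Finset (Finset ι)) :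
    Finset (Finset ι) :=
  (twoFacesMeeting p T S).biUnion (facesOfRank p · 1)

/-- The edges through `v` contained in a `2`-face that contains a vertex of `S`. -/
noncomputable def starEdges (p : ι → W) (T : Finset ι) (S : Finset (Finset ι)) (v : Finset ι) :
    Finset (Finset ι) :=
  (facesAbove p T v 2).filter fun e => ∃ F ∈ twoFacesMeeting p T S, e ⊆ F

variable {S : Finset (Finset ι)} {u v e F : Finset ι}

theorem mem_twoFacesMeeting :
    F ∈ twoFacesMeeting p T S ↔ ∃ u ∈ S, (IsConeFace p T F ∧ coneRank p F = 3) ∧ u ⊆ F := by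
  simp only [twoFacesMeeting, Finset.mem_biUnion, mem_facesAbove]

theorem mem_starVertices : v ∈ starVertices p T S ↔
    ∃ F ∈ twoFacesMeeting p T S, v ∈ facesOfRank p T 1 ∧ v ⊆ F := by
  simp only [starVertices, Finset.mem_biUnion]
  refine exists_congr fun F => and_congr_right fun hF => ?_
  obtain ⟨_, -, ⟨hFT, -⟩, -⟩ := mem_twoFacesMeeting.1 hF
  exact hFT.mem_facesOfRank_iff

theorem card_farVertices_add_three_le (hF : IsConeFace p F ∅) (hr : coneRank p F = 3)
    (hv : v ∈ facesOfRank p F 1) : #(farVertices p F v) + 3 ≤ #(facesOfRank p F 1) := by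
  obtain ⟨e₁, he₁, -⟩ := exists_mem_facesAbove_ne hv (by omega) ∅
  obtain ⟨e₂, he₂, hne⟩ := exists_mem_facesAbove_ne hv (by omega) e₁
  have he₁' := Finset.mem_filter.1 he₁
  have he₂' := Finset.mem_filter.1 he₂
  obtain ⟨u₁, hu₁, hu₁e, hu₁v⟩ := exists_mem_facesOfRank_one_ne hF he₁'.1 v
  obtain ⟨u₂, hu₂, hu₂e, hu₂v⟩ := exists_mem_facesOfRank_one_ne hF he₂'.1 v
  have hu : u₁ ≠ u₂ := by
    rintro rfl
    exact hne (eq_of_mem_facesAbove_of_subset hv hu₁ hu₁v he₂ he₁ hu₂e hu₁e)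
  have hcard : #{v, u₁, u₂} = 3 :=
    Finset.card_eq_three.2 ⟨v, u₁, u₂, hu₁v.symm, hu₂v.symm, hu, rfl⟩
  have hdisj : Disjoint (farVertices p F v) {v, u₁, u₂} := by
    simp only [Finset.disjoint_insert_right, Finset.disjoint_singleton_right, farVertices,
      Finset.mem_filter, not_and, not_forall, not_not]
    exact ⟨fun _ => ⟨e₁, he₁, he₁'.2⟩, fun _ => ⟨e₁, he₁, hu₁e⟩, fun _ => ⟨e₂, he₂, hu₂e⟩⟩
  rw [← hcard, ← Finset.card_union_of_disjoint hdisj]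
  refine Finset.card_le_card (Finset.union_subset (Finset.filter_subset _ _) ?_)
  simp [Finset.insert_subset_iff, hv, hu₁, hu₂]

theorem starVertices_insert_subset :
    starVertices p T (insert v S) ⊆ insert v (starVertices p T S) ∪
      (facesAbove p T v 2 \ starEdges p T S v).biUnion (fun e => (facesOfRank p e 1).erase v) ∪
      (facesAbove p T v 3 \ twoFacesMeeting p T S).biUnion (farVertices p · v) := by
  intro x hx
  obtain ⟨F, hF, hxT, hxF⟩ := mem_starVertices.1 hx
  simp only [Finset.mem_union, Finset.mem_insert, Finset.mem_biUnion, Finset.mem_sdiff,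
    mem_starVertices]
  by_cases hFS : F ∈ twoFacesMeeting p T S
  · exact .inl (.inl (.inr ⟨F, hFS, hxT, hxF⟩))
  have hvF : F ∈ facesAbove p T v 3 := by
    rw [twoFacesMeeting, Finset.biUnion_insert, Finset.mem_union] at hF
    exact hF.resolve_right hFS
  have hFT : IsConeFace p T F := (mem_facesAbove.1 hvF).1.1
  by_cases hfar : x ∈ farVertices p F v
  · exact .inr ⟨F, ⟨hvF, hFS⟩, hfar⟩
  obtain ⟨e, he, hxe⟩ : ∃ e ∈ facesAbove p F v 2, x ⊆ e := by
    by_contra! hnone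
    exact hfar (Finset.mem_filter.2 ⟨hFT.mem_facesOfRank_iff.2 ⟨hxT, hxF⟩, hnone⟩)
  have heT := (hFT.mem_facesAbove_iff.1 he).1
  refine .inl ?_
  by_cases hstar : e ∈ starEdges p T S v
  · obtain ⟨F', hF', heF'⟩ := (Finset.mem_filter.1 hstar).2
    exact .inl (.inr ⟨F', hF', hxT, hxe.trans heF'⟩)
  · rcases eq_or_ne x v with hxv | hxv
    · exact .inl (.inl hxv)
    · exact .inr ⟨e, ⟨heT, hstar⟩, Finset.mem_erase.2
        ⟨hxv, (mem_facesAbove.1 heT).1.1.mem_facesOfRank_iff.2 ⟨hxT, hxe⟩⟩⟩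

theorem card_starVertices_insert_le (hT : IsConeFace p T ∅) (hv : v ∈ facesOfRank p T 1) :
    (#(starVertices p T (insert v S)) : ℤ) + #(starEdges p T S v) ≤
      #(insert v (starVertices p T S)) + #(facesAbove p T v 2) +
        ∑ F ∈ facesAbove p T v 3 \ twoFacesMeeting p T S, faceExcess p F := by
  have hedge : #((facesAbove p T v 2 \ starEdges p T S v).biUnion
      fun e => (facesOfRank p e 1).erase v) ≤ #(facesAbove p T v 2 \ starEdges p T S v) * 1 := by
    refine Finset.card_biUnion_le_card_mul _ _ _ fun e he => ?_
    obtain ⟨⟨heT, hr⟩, hve⟩ := mem_facesAbove.1 (Finset.mem_sdiff.1 he).1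
    rw [Finset.card_erase_of_mem (heT.mem_facesOfRank_iff.2 ⟨hv, hve⟩),
      card_facesOfRank_one_of_coneRank_eq_two (hT.empty_of_isConeFace heT) hr]
  have hfar : (#((facesAbove p T v 3 \ twoFacesMeeting p T S).biUnion (farVertices p · v)) : ℤ) ≤
      ∑ F ∈ facesAbove p T v 3 \ twoFacesMeeting p T S, faceExcess p F := by
    refine (Nat.cast_le.2 Finset.card_biUnion_le).trans ?_
    rw [Nat.cast_sum]
    refine Finset.sum_le_sum fun F hF => ?_
    obtain ⟨⟨hFT, hr⟩, hvF⟩ := mem_facesAbove.1 (Finset.mem_sdiff.1 hF).1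
    have := card_farVertices_add_three_le (hT.empty_of_isConeFace hFT) hr
      (hFT.mem_facesOfRank_iff.2 ⟨hv, hvF⟩)
    rw [faceExcess]
    omega
  have hsplit : #(facesAbove p T v 2 \ starEdges p T S v) + #(starEdges p T S v) =
      #(facesAbove p T v 2) := Finset.card_sdiff_add_card_eq_card (Finset.filter_subset _ _)
  have hunion := (Finset.card_le_card (starVertices_insert_subset (p := p) (T := T) (S := S)
    (v := v))).trans ((Finset.card_union_le _ _).trans
      (Nat.add_le_add_right (Finset.card_union_le _ _) _))
  omega

theorem mem_starEdges_of_mem_facesAbove (hu : u ∈ S) (hue : u ⊆ e)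
    (hF : F ∈ facesAbove p T e 3) {e' : Finset ι} (he' : e' ∈ facesAbove p F v 2) :
    e' ∈ starEdges p T S v := by
  obtain ⟨hFr, heF⟩ := mem_facesAbove.1 hF
  obtain ⟨heT', heF'⟩ := hFr.1.mem_facesAbove_iff.1 he'
  exact Finset.mem_filter.2
    ⟨heT', F, mem_twoFacesMeeting.2 ⟨u, hu, hFr, hue.trans heF⟩, heF'⟩

theorem coneRank_le_card_starEdges_add_one (hr : 3 ≤ coneRank p T) (hu : u ∈ S)
    (hv : v ∈ facesOfRank p T 1) (he : e ∈ facesOfRank p T 2) (hue : u ⊆ e) (hve : v ⊆ e) :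
    coneRank p T ≤ #(starEdges p T S v) + 1 := by
  have hother : ∀ F ∈ facesAbove p T e 3, ∃ e' ∈ facesAbove p F v 2, e' ≠ e := fun F hF => by
    obtain ⟨⟨hFT, hFr⟩, heF⟩ := mem_facesAbove.1 hF
    exact exists_mem_facesAbove_ne (hFT.mem_facesOfRank_iff.2 ⟨hv, hve.trans heF⟩) (by omega) e
  choose! φ hφ hφe using hother
  have hφF : ∀ F ∈ facesAbove p T e 3, φ F ∈ facesAbove p T v 2 ∧ φ F ⊆ F := fun F hF =>
    (mem_facesAbove.1 hF).1.1.mem_facesAbove_iff.1 (hφ F hF)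
  have hcard : #(facesAbove p T e 3) ≤ #((starEdges p T S v).erase e) := by
    refine Finset.card_le_card_of_injOn φ (fun F hF => Finset.mem_erase.2 ⟨hφe F hF,
      mem_starEdges_of_mem_facesAbove hu hue hF (hφ F hF)⟩) fun F hF F' hF' heq => ?_
    exact eq_of_mem_facesAbove_of_subset he (Finset.mem_filter.1 (hφF F hF).1).1 (hφe F hF) hF hF'
      (hφF F hF).2 (heq ▸ (hφF F' hF').2)
  obtain ⟨F, hF⟩ := facesAbove_nonempty he hr
  have he' : e ∈ facesAbove p F v 2 := (mem_facesAbove.1 hF).1.1.mem_facesAbove_iff.2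
    ⟨Finset.mem_filter.2 ⟨he, hve⟩, (mem_facesAbove.1 hF).2⟩
  rw [Finset.card_erase_of_mem (mem_starEdges_of_mem_facesAbove hu hue hF he')] at hcard
  have hcovers : coneRank p T ≤ 2 + #(facesAbove p T e 3) := coneRank_le_add_card_facesAbove he
  omega

theorem mem_starVertices_of_subset (hr : 3 ≤ coneRank p T) (hu : u ∈ S)
    (hv : v ∈ facesOfRank p T 1) (he : e ∈ facesOfRank p T 2) (hue : u ⊆ e) (hve : v ⊆ e) :
    v ∈ starVertices p T S := by
  obtain ⟨F, hF⟩ := facesAbove_nonempty he hr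
  obtain ⟨hFr, heF⟩ := mem_facesAbove.1 hF
  exact mem_starVertices.2
    ⟨F, mem_twoFacesMeeting.2 ⟨u, hu, hFr, hue.trans heF⟩, hv, hve.trans heF⟩

theorem sum_twoFacesMeeting_insert {M : Type*} [AddCommMonoid M] (f : Finset ι → M) :
    ∑ F ∈ twoFacesMeeting p T (insert v S), f F = ∑ F ∈ twoFacesMeeting p T S, f F +
      ∑ F ∈ facesAbove p T v 3 \ twoFacesMeeting p T S, f F := by
  rw [twoFacesMeeting, Finset.biUnion_insert, ← twoFacesMeeting, Finset.union_comm,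
    ← Finset.union_sdiff_self_eq_union, Finset.sum_union Finset.disjoint_sdiff]

theorem facesOfRank_one_subset_starVertices (hr : 3 ≤ coneRank p T) :
    facesOfRank p T 1 ⊆ starVertices p T (facesOfRank p T 1) := fun v hv => by
  obtain ⟨e, he⟩ := facesAbove_nonempty hv (by omega)
  obtain ⟨he, hve⟩ := Finset.mem_filter.1 he
  exact mem_starVertices_of_subset hr hv hv he hve hve

theorem twoFacesMeeting_facesOfRank_one (hT : IsConeFace p T ∅) :
    twoFacesMeeting p T (facesOfRank p T 1) = facesOfRank p T 3 := by
  ext F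
  rw [mem_twoFacesMeeting, mem_facesOfRank]
  refine ⟨fun ⟨_, _, hF, _⟩ => hF, fun ⟨hFT, hr⟩ => ?_⟩
  obtain ⟨v, hv⟩ := facesOfRank_one_nonempty (hT.empty_of_isConeFace hFT) (by omega)
  rw [hFT.mem_facesOfRank_iff] at hv
  exact ⟨v, hv.1, ⟨hFT, hr⟩, hv.2⟩

theorem card_facesOfRank_one_le (hT : IsConeFace p T ∅) (hr : 3 ≤ coneRank p T) :
    (#(facesOfRank p T 1) : ℤ) ≤ coneRank p T + ∑ v ∈ facesOfRank p T 1, vertexExcess p T v +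
      ∑ F ∈ facesOfRank p T 3, faceExcess p F := by
  have hstar : (#(starVertices p T (facesOfRank p T 1)) : ℤ) ≤
      coneRank p T + ∑ v ∈ facesOfRank p T 1, vertexExcess p T v +
        ∑ F ∈ twoFacesMeeting p T (facesOfRank p T 1), faceExcess p F := by
    refine facesOfRank_one_induction hT (by omega) (P := fun S =>
      (#(starVertices p T S) : ℤ) ≤ coneRank p T + ∑ v ∈ S, vertexExcess p T v +
        ∑ F ∈ twoFacesMeeting p T S, faceExcess p F) (fun v hv => ?_)
      fun S u hu v hv hvS e he hue hve hS => ?_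
    · have hstep := card_starVertices_insert_le (S := ∅) hT hv
      simp only [twoFacesMeeting, starVertices, Finset.biUnion_empty, Finset.singleton_biUnion,
        Finset.sdiff_empty, insert_empty_eq, Finset.card_singleton, Finset.sum_singleton,
        vertexExcess] at hstep ⊢
      omega
    · have hstep := card_starVertices_insert_le (S := S) hT hv
      have hedges := coneRank_le_card_starEdges_add_one hr hu hv he hue hve
      rw [Finset.insert_eq_of_mem (mem_starVertices_of_subset hr hu hv he hue hve)] at hstep
      rw [sum_twoFacesMeeting_insert, Finset.sum_insert hvS, vertexExcess]
      omega
  rw [twoFacesMeeting_facesOfRank_one hT] at hstar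
  exact (Nat.cast_le.2 (Finset.card_le_card (facesOfRank_one_subset_starVertices hr))).trans hstar

theorem vertexExcess_nonneg (hv : v ∈ facesOfRank p T 1) : 0 ≤ vertexExcess p T v := by
  have hdegree : coneRank p T ≤ 1 + #(facesAbove p T v 2) := coneRank_le_add_card_facesAbove hv
  rw [vertexExcess]
  omega

theorem sum_vertexExcess (hT : IsConeFace p T ∅) :
    ∑ v ∈ facesOfRank p T 1, vertexExcess p T v =
      2 * #(facesOfRank p T 2) - #(facesOfRank p T 1) * (coneRank p T - 1 : ℤ) := by
  have hsum : (∑ v ∈ facesOfRank p T 1, #(facesAbove p T v 2) : ℤ) = 2 * #(facesOfRank p T 2) :=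
    mod_cast sum_card_facesAbove_two hT
  simp only [vertexExcess, add_sub_assoc, Finset.sum_add_distrib, hsum, Finset.sum_const,
    nsmul_eq_mul]
  ring

/-! ### The toric `g`-polynomial -/

variable {g : Finset ι → ℚ[X]} {n r : ℕ}

theorem X_sub_one_eq : (X - 1 : ℚ[X]) = X + Polynomial.C (-1) := by
  rw [C_neg, C_1, sub_eq_add_neg]

theorem natDegree_X_sub_one_pow (n : ℕ) : ((X - 1 : ℚ[X]) ^ n).natDegree = n := by
  rw [X_sub_one_eq, natDegree_pow_X_add_C]

theorem coeff_X_sub_one_pow (n k : ℕ) :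
    ((X - 1 : ℚ[X]) ^ n).coeff k = (-1) ^ (n - k) * n.choose k := by
  rw [X_sub_one_eq, coeff_X_add_C_pow]

theorem reflect_X_sub_one_pow (n : ℕ) : reflect n ((X - 1 : ℚ[X]) ^ n) = (1 - X) ^ n := by
  induction n with
  | zero => simp
  | succ n ih =>
    rw [pow_succ, reflect_mul _ _ (natDegree_X_sub_one_pow n).le
      (pow_one (X - 1 : ℚ[X]) ▸ natDegree_X_sub_one_pow 1).le, ih, reflect_sub, reflect_one_X,
      reflect_one, pow_one, pow_succ]

theorem reflect_mul_X_sub_one_pow {f : ℚ[X]} (hf : f.natDegree ≤ r) (hrn : r ≤ n) :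
    reflect n (f * (X - 1) ^ (n - r)) = reflect r f * (1 - X) ^ (n - r) := by
  rw [← reflect_X_sub_one_pow, ← reflect_mul _ _ hf (natDegree_X_sub_one_pow _).le,
    Nat.add_sub_cancel' hrn]

theorem reflect_sum {α : Type*} (s : Finset α) (f : α → ℚ[X]) (n : ℕ) :
    reflect n (∑ i ∈ s, f i) = ∑ i ∈ s, reflect n (f i) := by
  ext k
  simp only [coeff_reflect, finsetSum_coeff]

/-- The faces of the cone over `T` other than the whole cone. -/
noncomputable def properFaces (p : ι → W) (T : Finset ι) : Finset (Finset ι) :=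
  (coneFaces p T).erase T

theorem mem_properFaces : B ∈ properFaces p T ↔ B ≠ T ∧ IsConeFace p T B := by
  rw [properFaces, Finset.mem_erase, mem_coneFaces]

theorem coneRank_lt_of_mem_properFaces (hB : B ∈ properFaces p T) : coneRank p B < coneRank p T :=
  (mem_properFaces.1 hB).2.coneRank_lt (mem_properFaces.1 hB).1

theorem sum_properFaces {M : Type*} [AddCommMonoid M] (f : Finset ι → M) :
    ∑ B ∈ properFaces p T, f B =
      ∑ i ∈ Finset.range (coneRank p T), ∑ B ∈ facesOfRank p T i, f B := by
  rw [← Finset.sum_fiberwise_of_maps_to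
    fun B hB => Finset.mem_range.2 (coneRank_lt_of_mem_properFaces hB)]
  refine Finset.sum_congr rfl fun i hi => Finset.sum_congr ?_ fun _ _ => rfl
  ext B
  rw [Finset.mem_filter, mem_properFaces, mem_facesOfRank, and_assoc, and_iff_right_iff_imp]
  rintro ⟨-, rfl⟩ rfl
  exact (Finset.mem_range.1 hi).false

theorem coneFaces_eq_filter_properFaces (hB : B ∈ properFaces p T) :
    coneFaces p B = (properFaces p T).filter (· ⊆ B) := by
  obtain ⟨hne, hBT⟩ := mem_properFaces.1 hB
  ext C
  rw [mem_coneFaces, hBT.isConeFace_iff, Finset.mem_filter, mem_properFaces, and_assoc,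
    iff_and_self]
  rintro ⟨-, hCB⟩ rfl
  exact hne (hBT.subset.antisymm hCB)

theorem IsConeFace.sum_properFaces_neg_one_pow (hC : IsConeFace p T C) (hne : C ≠ T) :
    ∑ B ∈ properFaces p T with C ⊆ B, (-1 : ℚ[X]) ^ (coneRank p T - coneRank p B) = -1 := by
  have heuler := congrArg (Int.cast : ℤ → ℚ[X]) (hC.sum_neg_one_pow_coneRank hne)
  rw [← Finset.add_sum_erase _ _ (Finset.mem_filter.2 ⟨mem_coneFaces.2 (.refl p T), hC.subset⟩),
    ← Finset.filter_erase, ← properFaces] at heuler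
  push_cast at heuler
  have hsign : ∀ B ∈ (properFaces p T).filter (C ⊆ ·),
      (-1 : ℚ[X]) ^ (coneRank p T - coneRank p B) =
        (-1) ^ coneRank p T * (-1) ^ coneRank p B := fun B hB => by
    have hlt := coneRank_lt_of_mem_properFaces (Finset.mem_filter.1 hB).1
    rw [← pow_add, neg_one_pow_congr]
    grind
  rw [Finset.sum_congr rfl hsign, ← Finset.mul_sum, eq_neg_of_add_eq_zero_right heuler, mul_neg,
    ← pow_add, Even.neg_one_pow ⟨_, rfl⟩]

/-- `(X - 1) * h`, where `h` is the toric `h`-polynomial of the cone over `A` computed from the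
toric `g`-polynomials of its proper faces. -/
noncomputable def shiftedH (p : ι → W) (g : Finset ι → ℚ[X]) (A : Finset ι) : ℚ[X] :=
  ∑ B ∈ properFaces p A, g B * (X - 1) ^ (coneRank p A - coneRank p B)

theorem add_shiftedH (p : ι → W) (g : Finset ι → ℚ[X]) (A : Finset ι) :
    g A + shiftedH p g A =
      ∑ B ∈ coneFaces p A, g B * (X - 1) ^ (coneRank p A - coneRank p B) := by
  rw [shiftedH, properFaces, ← Finset.add_sum_erase _ _ (mem_coneFaces.2 (.refl p A)),
    Nat.sub_self, pow_zero, mul_one]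

theorem reflect_mul_X_sub_one_pow_coneRank (hB : B ∈ properFaces p T)
    (hdeg : (g B).natDegree ≤ coneRank p B)
    (hrefl : reflect (coneRank p B) (g B) = g B + shiftedH p g B) :
    reflect (coneRank p T) (g B * (X - 1) ^ (coneRank p T - coneRank p B)) =
      ∑ C ∈ coneFaces p B, g C * (X - 1) ^ (coneRank p T - coneRank p C) *
        (-1) ^ (coneRank p T - coneRank p B) := by
  have hlt := coneRank_lt_of_mem_properFaces hB
  rw [reflect_mul_X_sub_one_pow hdeg hlt.le, hrefl, add_shiftedH, Finset.sum_mul]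
  refine Finset.sum_congr rfl fun C hC => ?_
  have hle := coneRank_mono (p := p) (mem_coneFaces.1 hC).subset
  rw [show coneRank p T - coneRank p C =
      (coneRank p B - coneRank p C) + (coneRank p T - coneRank p B) by omega,
    ← neg_sub X, neg_pow (X - 1 : ℚ[X]), pow_add]
  ring

/-- Palindromicity of the toric `h`-polynomial, in terms of `(X - 1) * h`. -/
theorem reflect_shiftedH (hdeg : ∀ B ∈ properFaces p T, (g B).natDegree ≤ coneRank p B)
    (hrefl : ∀ B ∈ properFaces p T, reflect (coneRank p B) (g B) = g B + shiftedH p g B) :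
    reflect (coneRank p T) (shiftedH p g T) = -shiftedH p g T := by
  calc reflect (coneRank p T) (shiftedH p g T)
    _ = ∑ B ∈ properFaces p T, ∑ C ∈ coneFaces p B,
          g C * (X - 1) ^ (coneRank p T - coneRank p C) *
            (-1) ^ (coneRank p T - coneRank p B) := by
        rw [shiftedH, reflect_sum]
        exact Finset.sum_congr rfl fun B hB =>
          reflect_mul_X_sub_one_pow_coneRank hB (hdeg B hB) (hrefl B hB)
    _ = ∑ C ∈ properFaces p T, ∑ B ∈ properFaces p T with C ⊆ B,
          g C * (X - 1) ^ (coneRank p T - coneRank p C) *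
            (-1) ^ (coneRank p T - coneRank p B) := by
        refine Finset.sum_comm' fun B C => ?_
        rw [Finset.mem_filter, and_assoc]
        refine and_congr_right fun hB => ?_
        rw [coneFaces_eq_filter_properFaces hB, Finset.mem_filter, and_comm]
    _ = -shiftedH p g T := by
        rw [shiftedH, ← Finset.sum_neg_distrib]
        refine Finset.sum_congr rfl fun C hC => ?_
        obtain ⟨hne, hCT⟩ := mem_properFaces.1 hC
        rw [← Finset.mul_sum, hCT.sum_properFaces_neg_one_pow hne, mul_neg_one]

/-- `g` assigns to every face of the pointed cone over `T` its toric `g`-polynomial. A face of rank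
`r` corresponds to a polytope of dimension `r - 1`, so the truncation `k ≤ d / 2` reads `2 * k < r`;
there `h_k - h_{k-1}` is minus the `k`-th coefficient of `(X - 1) * h`. -/
structure IsToricG (p : ι → W) (T : Finset ι) (g : Finset ι → ℚ[X]) : Prop where
  pointed : IsConeFace p T ∅
  empty : g ∅ = 1
  coeff_eq : ∀ A, IsConeFace p T A → A.Nonempty → ∀ k,
    (g A).coeff k = if 2 * k < coneRank p A then -(shiftedH p g A).coeff k else 0

namespace IsToricG

theorem of_isConeFace (hg : IsToricG p T g) (hA : IsConeFace p T A) : IsToricG p A g where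
  pointed := hg.pointed.empty_of_isConeFace hA
  empty := hg.empty
  coeff_eq B hB := hg.coeff_eq B (hA.trans hB)

theorem coeff_eq_zero (hg : IsToricG p T g) (hne : T.Nonempty) (hk : coneRank p T ≤ 2 * k) :
    (g T).coeff k = 0 := by
  rw [hg.coeff_eq T (.refl p T) hne, if_neg (by omega)]

theorem natDegree_le (hg : IsToricG p T g) : (g T).natDegree ≤ (coneRank p T - 1) / 2 := by
  rcases T.eq_empty_or_nonempty with rfl | hne
  · simp [hg.empty]
  · have := coneRank_pos hg.pointed hne
    exact natDegree_le_iff_coeff_eq_zero.2 fun k hk => hg.coeff_eq_zero hne (by omega)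

theorem reflect_eq_of_reflect_shiftedH (hg : IsToricG p T g) (hne : T.Nonempty)
    (hrefl : reflect (coneRank p T) (shiftedH p g T) = -shiftedH p g T) :
    reflect (coneRank p T) (g T) = g T + shiftedH p g T := by
  ext k
  have hk : (shiftedH p g T).coeff (revAt (coneRank p T) k) = -(shiftedH p g T).coeff k := by
    rw [← coeff_reflect, hrefl, coeff_neg]
  rw [coeff_reflect, coeff_add, hg.coeff_eq T (.refl p T) hne, hg.coeff_eq T (.refl p T) hne]
  rcases le_or_gt k (coneRank p T) with hkr | hkr
  · rw [revAt_le hkr] at hk ⊢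
    rcases lt_trichotomy (2 * k) (coneRank p T) with hlt | heq | hgt
    · rw [if_pos hlt, if_neg (by omega)]
      ring
    · rw [show coneRank p T - k = k by omega] at hk ⊢
      rw [if_neg (by omega)]
      linarith
    · rw [if_neg (by omega : ¬ 2 * k < _), if_pos (by omega), hk]
      ring
  · rw [revAt_eq_self_of_lt hkr] at hk ⊢
    rw [if_neg (by omega)]
    linarith

theorem reflect_eq (hg : IsToricG p T g) :
    reflect (coneRank p T) (g T) = g T + shiftedH p g T := by
  induction T using Finset.strongInduction with
  | H T ih =>
  rcases T.eq_empty_or_nonempty with rfl | hne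
  · have hproper : properFaces p (∅ : Finset ι) = ∅ := Finset.eq_empty_of_forall_notMem
      fun B hB => absurd (coneRank_lt_of_mem_properFaces hB) (by simp)
    simp [shiftedH, hproper, hg.empty]
  · refine hg.reflect_eq_of_reflect_shiftedH hne (reflect_shiftedH (fun B hB => ?_) fun B hB => ?_)
    all_goals obtain ⟨hBne, hBT⟩ := mem_properFaces.1 hB
    · exact (hg.of_isConeFace hBT).natDegree_le.trans (by omega)
    · exact ih B (hBT.subset.ssubset_of_ne hBne) (hg.of_isConeFace hBT)

theorem coeff_eq_coeff_shiftedH (hg : IsToricG p T g) (hne : T.Nonempty)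
    (hk : 2 * k < coneRank p T) : (g T).coeff k = (shiftedH p g T).coeff (coneRank p T - k) := by
  have hcoeff := congrArg (Polynomial.coeff · (coneRank p T - k)) hg.reflect_eq
  simp only [coeff_reflect, coeff_add] at hcoeff
  rwa [revAt_le (by omega), Nat.sub_sub_self (by omega),
    hg.coeff_eq_zero hne (by omega : coneRank p T ≤ 2 * (coneRank p T - k)), zero_add] at hcoeff

/-- The faces of rank at least `n` do not contribute to the coefficient, for degree reasons. -/
theorem coeff_eq_sum (hg : IsToricG p T g) (hk : 2 * k < coneRank p T) (hn : 0 < n)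
    (hkn : 2 * k ≤ n) (hnr : n ≤ coneRank p T) :
    (g T).coeff k = ∑ i ∈ Finset.range n, ∑ B ∈ facesOfRank p T i,
      (g B * (X - 1) ^ (coneRank p T - i)).coeff (coneRank p T - k) := by
  have hne : T.Nonempty := Finset.nonempty_iff_ne_empty.2 fun h => by simp [h] at hk
  rw [hg.coeff_eq_coeff_shiftedH hne hk, shiftedH, finsetSum_coeff, sum_properFaces]
  symm
  trans ∑ i ∈ Finset.range n, ∑ B ∈ facesOfRank p T i,
      (g B * (X - 1) ^ (coneRank p T - coneRank p B)).coeff (coneRank p T - k)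
  · refine Finset.sum_congr rfl fun i _ => Finset.sum_congr rfl fun B hB => ?_
    rw [(mem_facesOfRank.1 hB).2]
  refine Finset.sum_subset (Finset.range_subset_range.2 hnr) fun i hir hin =>
    Finset.sum_eq_zero fun B hB => coeff_eq_zero_of_natDegree_lt ?_
  obtain ⟨hBT, rfl⟩ := mem_facesOfRank.1 hB
  have hdeg := (hg.of_isConeFace hBT).natDegree_le
  have hmul := natDegree_mul_le (p := g B) (q := (X - 1) ^ (coneRank p T - coneRank p B))
  rw [natDegree_X_sub_one_pow] at hmul
  rw [Finset.mem_range] at hir hin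
  omega

theorem coeff_zero (hg : IsToricG p T g) : (g T).coeff 0 = 1 := by
  rcases T.eq_empty_or_nonempty with rfl | hne
  · simp [hg.empty]
  · have hr := coneRank_pos hg.pointed hne
    rw [hg.coeff_eq_sum (n := 1) (by omega) one_pos (by omega) hr]
    simp [facesOfRank_zero hg.pointed, hg.empty, coeff_X_sub_one_pow]

theorem eq_one_of_coneRank_le_two (hg : IsToricG p T g) (hr : coneRank p T ≤ 2) : g T = 1 := by
  have hdeg := hg.natDegree_le
  rw [eq_C_of_natDegree_eq_zero (p := g T) (by omega), hg.coeff_zero, C_1]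

theorem sum_facesOfRank_of_le_two (hg : IsToricG p T g) {i : ℕ} (hi : i ≤ 2) (n k : ℕ) :
    ∑ B ∈ facesOfRank p T i, (g B * (X - 1) ^ n).coeff k =
      (#(facesOfRank p T i) : ℚ) * ((-1) ^ (n - k) * n.choose k) := by
  rw [← nsmul_eq_mul, ← Finset.sum_const]
  refine Finset.sum_congr rfl fun B hB => ?_
  obtain ⟨hBT, rfl⟩ := mem_facesOfRank.1 hB
  rw [(hg.of_isConeFace hBT).eq_one_of_coneRank_le_two hi, one_mul, coeff_X_sub_one_pow]

theorem coeff_one (hg : IsToricG p T g) (hr : 3 ≤ coneRank p T) :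
    (g T).coeff 1 = #(facesOfRank p T 1) - coneRank p T := by
  obtain ⟨m, hm⟩ := Nat.exists_eq_add_of_le' hr
  rw [hg.coeff_eq_sum (n := 2) (by omega) two_pos (by omega) (by omega), Finset.sum_range_succ,
    Finset.sum_range_one, hg.sum_facesOfRank_of_le_two (by omega),
    hg.sum_facesOfRank_of_le_two (by omega), facesOfRank_zero hg.pointed, hm]
  simp only [Finset.card_singleton, Nat.cast_one, tsub_zero, Nat.add_one_sub_one,
    Nat.reduceSubDiff, add_tsub_cancel_left, Nat.choose_succ_self_right, tsub_self,
    Nat.choose_self]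
  push_cast
  ring

theorem coeff_mul_X_sub_one_pow_of_coneRank_eq_three (hg : IsToricG p T g) (hr : coneRank p T = 3)
    (n : ℕ) : (g T * (X - 1) ^ n).coeff (n + 1) = (faceExcess p T : ℚ) := by
  have hdeg := hg.natDegree_le
  have heq := eq_X_add_C_of_natDegree_le_one (p := g T) (by omega)
  rw [hg.coeff_zero, hg.coeff_one hr.ge, hr] at heq
  rw [heq, add_mul, mul_assoc, coeff_add, coeff_C_mul, coeff_X_mul, coeff_C_mul,
    coeff_X_sub_one_pow, coeff_X_sub_one_pow, faceExcess]
  simp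

theorem coeff_two (hg : IsToricG p T g) (hr : 5 ≤ coneRank p T) :
    (g T).coeff 2 = (coneRank p T : ℚ) * (coneRank p T - 1) / 2 -
      (coneRank p T - 1) * #(facesOfRank p T 1) + #(facesOfRank p T 2) +
        ((∑ F ∈ facesOfRank p T 3, faceExcess p F : ℤ) : ℚ) := by
  obtain ⟨m, hm⟩ := Nat.exists_eq_add_of_le' hr
  have hthree : ∑ F ∈ facesOfRank p T 3, (g F * (X - 1) ^ (m + 5 - 3)).coeff (m + 5 - 2) =
      ((∑ F ∈ facesOfRank p T 3, faceExcess p F : ℤ) : ℚ) := by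
    push_cast
    refine Finset.sum_congr rfl fun F hF => ?_
    obtain ⟨hFT, hFr⟩ := mem_facesOfRank.1 hF
    exact (hg.of_isConeFace hFT).coeff_mul_X_sub_one_pow_of_coneRank_eq_three hFr (m + 2)
  have hchoose : (m + 5).choose (m + 3) = (m + 5).choose 2 :=
    Nat.choose_symm_add (a := m + 3) (b := 2)
  rw [hg.coeff_eq_sum (n := 4) (by omega) (by omega) (by omega) (by omega), hm]
  simp only [Finset.sum_range_succ, Finset.sum_range_zero, zero_add, hthree]
  rw [hg.sum_facesOfRank_of_le_two (by omega), hg.sum_facesOfRank_of_le_two (by omega),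
    hg.sum_facesOfRank_of_le_two (by omega), facesOfRank_zero hg.pointed]
  simp only [Finset.card_singleton, Nat.cast_one, tsub_zero, Nat.reduceSubDiff,
    add_tsub_cancel_left, hchoose, Nat.cast_choose_two, Nat.add_one_sub_one,
    Nat.choose_succ_self_right, tsub_self, Nat.choose_self]
  push_cast
  ring

theorem le_coeff_two_of_coneRank_le_four (hg : IsToricG p T g) (hr : 3 ≤ coneRank p T)
    (hr' : coneRank p T ≤ 4) : (coneRank p T : ℚ) * (coneRank p T - 3) / 2 ≤
      (g T).coeff 2 + #(facesOfRank p T 2) - #(facesOfRank p T 1) := by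
  have hne : T.Nonempty := Finset.nonempty_iff_ne_empty.2 fun h => by simp [h] at hr
  have hdegree : (#(facesOfRank p T 1) : ℚ) * (coneRank p T - 1) ≤ 2 * #(facesOfRank p T 2) := by
    have hnonneg := Finset.sum_nonneg fun v hv => vertexExcess_nonneg (p := p) (T := T) hv
    rw [sum_vertexExcess hg.pointed, sub_nonneg] at hnonneg
    exact_mod_cast hnonneg
  have hvertices : (coneRank p T : ℚ) ≤ #(facesOfRank p T 1) :=
    mod_cast card_facesOfRank_one_ge hg.pointed
  have hr3 : (3 : ℚ) ≤ coneRank p T := mod_cast hr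
  rw [hg.coeff_eq_zero hne (by omega)]
  nlinarith [mul_le_mul_of_nonneg_right hvertices (sub_nonneg.2 hr3)]

theorem le_coeff_two_of_five_le_coneRank (hg : IsToricG p T g) (hr : 5 ≤ coneRank p T) :
    (coneRank p T : ℚ) * (coneRank p T - 3) / 2 ≤
      (g T).coeff 2 + #(facesOfRank p T 2) - #(facesOfRank p T 1) := by
  have hgrowth := card_facesOfRank_one_le hg.pointed (by omega)
  rw [sum_vertexExcess hg.pointed] at hgrowth
  have hgrowth' : (#(facesOfRank p T 1) : ℚ) ≤ coneRank p T + (2 * #(facesOfRank p T 2) -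
      #(facesOfRank p T 1) * (coneRank p T - 1)) +
        ((∑ F ∈ facesOfRank p T 3, faceExcess p F : ℤ) : ℚ) := mod_cast hgrowth
  rw [hg.coeff_two hr]
  linarith

end IsToricG

end ConeFaces

/-! ### Polytopes as cones -/

section Polytopes

variable {V : Type*} [AddCommGroup V] [Module ℝ V] {A B C : Finset V} {l : V →ₗ[ℝ] ℝ} {m : ℝ}
  {s x : V}

theorem mem_convexHull_filter (hle : ∀ s ∈ A, l s ≤ m) (hx : x ∈ convexHull ℝ (A : Set V))
    (hxm : l x = m) : x ∈ convexHull ℝ (A.filter (l · = m) : Set V) := by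
  obtain ⟨w, hw, hw_sum, hwx⟩ := Finset.mem_convexHull'.1 hx
  have hdefect : ∑ y ∈ A, w y * (m - l y) = 0 := by
    have hlx : ∑ y ∈ A, w y * l y = m := by
      rw [← hxm, ← hwx, map_sum]
      simp only [map_smul, smul_eq_mul]
    rw [← sub_self m, ← hlx]
    simp only [mul_sub, Finset.sum_sub_distrib, ← Finset.sum_mul, hw_sum, one_mul, hlx]
  have hsupport : ∀ y ∈ A, w y ≠ 0 → l y = m := fun y hy hwy => by
    have hterm := (Finset.sum_eq_zero_iff_of_nonneg fun y hy =>
      mul_nonneg (hw y hy) (sub_nonneg.2 (hle y hy))).1 hdefect y hy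
    linarith [(mul_eq_zero.1 hterm).resolve_left hwy]
  refine Finset.mem_convexHull'.2 ⟨w, fun y hy => hw y (Finset.mem_filter.1 hy).1, ?_, ?_⟩
  · rwa [Finset.sum_filter_of_ne hsupport]
  · rwa [Finset.sum_filter_of_ne fun y hy hwy => hsupport y hy (left_ne_zero_of_smul hwy)]

theorem apply_eq_of_mem_convexHull (h : ∀ s ∈ A, l s = m) (hx : x ∈ convexHull ℝ (A : Set V)) :
    l x = m :=
  convexHull_min (t := {x | l x = m}) h (convex_hyperplane l.isLinear m) hx

theorem apply_le_of_mem_convexHull (h : ∀ s ∈ A, l s ≤ m) (hx : x ∈ convexHull ℝ (A : Set V)) :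
    l x ≤ m :=
  convexHull_min (t := {x | l x ≤ m}) h (convex_halfSpace_le l.isLinear m) hx

theorem setOf_maximizers_convexHull (hle : ∀ s ∈ A, l s ≤ m) (hs : s ∈ A) (hsm : l s = m) :
    {x | x ∈ convexHull ℝ (A : Set V) ∧ ∀ y ∈ convexHull ℝ (A : Set V), l y ≤ l x} =
      convexHull ℝ (A.filter (l · = m) : Set V) := by
  ext x
  refine ⟨fun ⟨hx, hmax⟩ => mem_convexHull_filter hle hx ?_, fun hx => ?_⟩
  · exact (apply_le_of_mem_convexHull hle hx).antisymm (hsm ▸ hmax s (subset_convexHull ℝ _ hs))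
  · have hxm := apply_eq_of_mem_convexHull (fun s hs => (Finset.mem_filter.1 hs).2) hx
    exact ⟨convexHull_mono (Finset.coe_subset.2 (Finset.filter_subset _ _)) hx,
      fun y hy => hxm ▸ apply_le_of_mem_convexHull hle hy⟩

/-- The embedding at height one: the faces of `convexHull ℝ S` correspond to the faces of the cone
generated by `atHeightOne '' S`, whose rank is one more than their dimension. -/
def atHeightOne (s : V) : V × ℝ := (s, 1)

theorem apply_atHeightOne (L : V × ℝ →ₗ[ℝ] ℝ) (s : V) :
    L (atHeightOne s) = L (s, 0) + L (0, 1) := by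
  rw [← map_add, Prod.mk_add_mk, add_zero, zero_add, atHeightOne]

theorem isConeFace_atHeightOne_empty (S : Finset V) : IsConeFace atHeightOne S ∅ :=
  ⟨LinearMap.snd ℝ V ℝ, Finset.empty_subset S, by simp, fun _ _ _ => one_pos⟩

theorem IsConeFace.isFace (h : IsConeFace atHeightOne A B) :
    IsFace (convexHull ℝ (A : Set V)) (convexHull ℝ (B : Set V)) := by
  rcases B.eq_empty_or_nonempty with rfl | ⟨s, hs⟩
  · exact .inr (.inl (by simp))
  obtain ⟨L, hL⟩ := h
  have hfilter : B = A.filter ((-L.comp (LinearMap.inl ℝ V ℝ)) · = L (0, 1)) := by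
    ext t
    have happly := apply_atHeightOne L t
    rw [Finset.mem_filter]
    refine ⟨fun ht => ⟨hL.subset ht, ?_⟩, fun ⟨ht, heq⟩ => hL.mem_of_eq_zero ht ?_⟩
    · simpa using by linarith [hL.eq_zero t ht]
    · simp only [LinearMap.neg_apply, LinearMap.comp_apply, LinearMap.inl_apply] at heq
      linarith
  refine .inr (.inr ⟨-L.comp (LinearMap.inl ℝ V ℝ), ?_⟩)
  have hle : ∀ t ∈ A, (-L.comp (LinearMap.inl ℝ V ℝ)) t ≤ L (0, 1) := fun t ht => by
    have hnonneg := hL.nonneg ht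
    rw [apply_atHeightOne] at hnonneg
    simpa using by linarith
  rw [setOf_maximizers_convexHull hle (hL.subset hs)
    (Finset.mem_filter.1 (Finset.ext_iff.1 hfilter s |>.1 hs)).2, ← hfilter]

theorem isConeFace_filter (hle : ∀ t ∈ A, l t ≤ m) :
    IsConeFace atHeightOne A (A.filter (l · = m)) := by
  refine ⟨m • LinearMap.snd ℝ V ℝ - l.comp (LinearMap.fst ℝ V ℝ), Finset.filter_subset _ _, ?_, ?_⟩
  · simp +contextual [atHeightOne]
  · intro t ht hne
    have hlt := (hle t ht).lt_of_ne fun heq => hne (Finset.mem_filter.2 ⟨ht, heq⟩)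
    simpa [atHeightOne] using hlt

theorem isFace_convexHull_iff {F : Set V} : IsFace (convexHull ℝ (A : Set V)) F ↔
    ∃ B, IsConeFace atHeightOne A B ∧ convexHull ℝ (B : Set V) = F := by
  refine ⟨?_, fun ⟨B, hB, h⟩ => h ▸ hB.isFace⟩
  rintro (rfl | rfl | ⟨l, rfl⟩)
  · exact ⟨A, .refl _ A, rfl⟩
  · exact ⟨∅, isConeFace_atHeightOne_empty A, by simp⟩
  · rcases A.eq_empty_or_nonempty with rfl | hA
    · exact ⟨∅, .refl _ ∅, by simp⟩
    · obtain ⟨s, hs, hmax⟩ := A.exists_max_image l hA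
      exact ⟨_, isConeFace_filter hmax, (setOf_maximizers_convexHull hmax hs rfl).symm⟩

theorem IsConeFace.mem_of_mem_convexHull (h : IsConeFace atHeightOne A B) (hs : s ∈ A)
    (hsB : s ∈ convexHull ℝ (B : Set V)) : s ∈ B := by
  obtain ⟨L, hL⟩ := h
  refine hL.mem_of_eq_zero hs ?_
  have heq := apply_eq_of_mem_convexHull (l := L.comp (LinearMap.inl ℝ V ℝ)) (m := -L (0, 1))
    (fun t ht => eq_neg_of_add_eq_zero_left ((apply_atHeightOne L t).symm.trans (hL.eq_zero t ht)))
    hsB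
  rw [apply_atHeightOne]
  exact eq_neg_iff_add_eq_zero.1 heq

theorem injOn_convexHull_coneFaces (A : Finset V) :
    Set.InjOn (fun B : Finset V => convexHull ℝ (B : Set V)) (coneFaces atHeightOne A) := by
  have hsub : ∀ B C, IsConeFace atHeightOne A B → IsConeFace atHeightOne A C →
      convexHull ℝ (B : Set V) = convexHull ℝ (C : Set V) → B ⊆ C := fun B C hB hC h s hs =>
    hC.mem_of_mem_convexHull (hB.subset hs) (h ▸ subset_convexHull ℝ (B : Set V) hs)
  intro B hB C hC h
  rw [Finset.mem_coe, mem_coneFaces] at hB hC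
  exact (hsub B C hB hC h).antisymm (hsub C B hC hB h.symm)

theorem span_image_atHeightOne (hs : s ∈ A) :
    Submodule.span ℝ (atHeightOne '' (A : Set V)) =
      (vectorSpan ℝ (A : Set V)).map (LinearMap.inl ℝ V ℝ) ⊔ Submodule.span ℝ {atHeightOne s} := by
  have hdiff (t : V) : LinearMap.inl ℝ V ℝ (t -ᵥ s) = atHeightOne t - atHeightOne s := by
    simp [atHeightOne]
  have hmem (t : V) (ht : t ∈ A) : atHeightOne t ∈ Submodule.span ℝ (atHeightOne '' (A : Set V)) :=
    Submodule.subset_span ⟨t, ht, rfl⟩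
  apply le_antisymm
  · rw [Submodule.span_le]
    rintro _ ⟨t, ht, rfl⟩
    rw [← sub_add_cancel (atHeightOne t) (atHeightOne s), ← hdiff]
    exact Submodule.add_mem_sup (Submodule.mem_map_of_mem (vsub_mem_vectorSpan ℝ ht hs))
      (Submodule.mem_span_singleton_self _)
  · rw [sup_le_iff, vectorSpan_eq_span_vsub_set_right ℝ (Finset.mem_coe.2 hs),
      Submodule.map_span_le, Submodule.span_singleton_le_iff_mem]
    refine ⟨?_, hmem s hs⟩
    rintro _ ⟨t, ht, rfl⟩
    exact hdiff t ▸ Submodule.sub_mem _ (hmem t ht) (hmem s hs)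

theorem disjoint_map_inl_span_atHeightOne (U : Submodule ℝ V) (s : V) :
    Disjoint (U.map (LinearMap.inl ℝ V ℝ)) (Submodule.span ℝ {atHeightOne s}) := by
  rw [Submodule.disjoint_def]
  rintro _ ⟨v, -, rfl⟩ hv
  obtain ⟨c, hc⟩ := Submodule.mem_span_singleton.1 hv
  have hc0 : c = 0 := by simpa [atHeightOne] using congrArg Prod.snd hc
  rw [← hc, hc0, zero_smul]

theorem pdim_convexHull (A : Finset V) :
    pdim (convexHull ℝ (A : Set V)) = coneRank atHeightOne A - 1 := by
  rcases A.eq_empty_or_nonempty with rfl | hA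
  · simp [pdim]
  rw [pdim, if_neg (by simpa using hA.ne_empty), affineSpan_convexHull, direction_affineSpan]
  obtain ⟨s, hs⟩ := hA
  have hfin : FiniteDimensional ℝ (vectorSpan ℝ (A : Set V)) :=
    finiteDimensional_vectorSpan_of_finite ℝ A.finite_toSet
  have hsum := Submodule.finrank_sup_add_finrank_inf_eq
    ((vectorSpan ℝ (A : Set V)).map (LinearMap.inl ℝ V ℝ)) (Submodule.span ℝ {atHeightOne s})
  rw [(disjoint_map_inl_span_atHeightOne _ s).eq_bot, ← span_image_atHeightOne hs, finrank_bot,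
    finrank_span_singleton (by simp [atHeightOne]),
    ← (Submodule.equivMapOfInjective _ LinearMap.inl_injective _).finrank_eq] at hsum
  rw [coneRank]
  omega

theorem ncard_faces_convexHull (S : Finset V) (k : ℕ) :
    {F : Set V | IsFace (convexHull ℝ (S : Set V)) F ∧ pdim F = k}.ncard =
      #(facesOfRank atHeightOne S (k + 1)) := by
  have himage : {F : Set V | IsFace (convexHull ℝ (S : Set V)) F ∧ pdim F = k} =
      (fun B : Finset V => convexHull ℝ (B : Set V)) '' facesOfRank atHeightOne S (k + 1) := by
    ext F
    simp only [Set.mem_ofPred_eq, isFace_convexHull_iff, Set.mem_image, Finset.mem_coe,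
      mem_facesOfRank]
    constructor
    · rintro ⟨⟨B, hB, rfl⟩, hdim⟩
      exact ⟨B, ⟨hB, by rw [pdim_convexHull] at hdim; omega⟩, rfl⟩
    · rintro ⟨B, ⟨hB, hr⟩, rfl⟩
      exact ⟨⟨B, hB, rfl⟩, by rw [pdim_convexHull]; omega⟩
  have hinj := (injOn_convexHull_coneFaces S).mono
    (Finset.coe_subset.2 (Finset.filter_subset (coneRank atHeightOne · = k + 1) _))
  rw [himage, ← Set.ncard_coe_finset]
  exact hinj.ncard_image

theorem pdim_empty : pdim (∅ : Set V) = -1 := if_pos rfl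

theorem setOf_isFace_ne (A : Finset V) :
    {F : Set V | IsFace (convexHull ℝ (A : Set V)) F ∧ ∅ ⊆ F ∧ F ≠ convexHull ℝ (A : Set V)} =
      (fun B : Finset V => convexHull ℝ (B : Set V)) '' properFaces atHeightOne A := by
  ext F
  simp only [Set.mem_ofPred_eq, isFace_convexHull_iff, Set.mem_image, Finset.mem_coe,
    mem_properFaces, Set.empty_subset, true_and]
  constructor
  · rintro ⟨⟨B, hB, rfl⟩, hne⟩
    exact ⟨B, ⟨fun h => hne (h ▸ rfl), hB⟩, rfl⟩
  · rintro ⟨B, ⟨hne, hB⟩, rfl⟩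
    exact ⟨⟨B, hB, rfl⟩, fun h => hne (injOn_convexHull_coneFaces A (mem_coneFaces.2 hB)
      (mem_coneFaces.2 (.refl _ A)) h)⟩

theorem relHAux_succ_convexHull (hA : A.Nonempty) (n : ℕ) :
    relHAux (n + 1) ∅ (convexHull ℝ (A : Set V)) = ∑ B ∈ properFaces atHeightOne A,
      truncG (coneRank atHeightOne B - 1) (relHAux n ∅ (convexHull ℝ (B : Set V))) *
        (X - 1) ^ (coneRank atHeightOne A - coneRank atHeightOne B - 1) := by
  have hinj := (injOn_convexHull_coneFaces A).mono
    (Finset.coe_subset.2 (Finset.erase_subset A (coneFaces atHeightOne A)))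
  rw [← properFaces] at hinj
  rw [relHAux, if_neg (by simpa using hA.ne_empty), setOf_isFace_ne, finsum_mem_image hinj,
    finsum_mem_coe_finset]
  refine Finset.sum_congr rfl fun B _ => ?_
  rw [pdim_convexHull, pdim_convexHull, pdim_empty]
  congr 2
  · congr 1
    ring
  · omega

theorem relHAux_empty_empty (n : ℕ) : relHAux n (∅ : Set V) ∅ = 1 := by
  cases n <;> simp [relHAux]

theorem relHAux_convexHull_congr {m n : ℕ} (hm : coneRank atHeightOne A ≤ m)
    (hn : coneRank atHeightOne A ≤ n) :
    relHAux m ∅ (convexHull ℝ (A : Set V)) = relHAux n ∅ (convexHull ℝ (A : Set V)) := by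
  induction m generalizing A n with
  | zero =>
    have hA : A = ∅ := by
      by_contra! hne
      exact (coneRank_pos (isConeFace_atHeightOne_empty A) hne).not_ge hm
    simp only [hA, Finset.coe_empty, convexHull_empty, relHAux_empty_empty]
  | succ m ih =>
    rcases A.eq_empty_or_nonempty with rfl | hA
    · simp only [Finset.coe_empty, convexHull_empty, relHAux_empty_empty]
    have hpos := coneRank_pos (isConeFace_atHeightOne_empty A) hA
    obtain ⟨n, rfl⟩ := Nat.exists_eq_add_of_le' (hpos.trans_le hn)
    rw [relHAux_succ_convexHull hA, relHAux_succ_convexHull hA]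
    refine Finset.sum_congr rfl fun B hB => ?_
    have hlt := coneRank_lt_of_mem_properFaces hB
    rw [ih (by omega) (by omega : coneRank atHeightOne B ≤ n)]

theorem toricH_convexHull {n : ℕ} (hn : coneRank atHeightOne A ≤ n) :
    toricH (convexHull ℝ (A : Set V)) = relHAux n ∅ (convexHull ℝ (A : Set V)) := by
  rw [toricH, relH]
  exact relHAux_convexHull_congr (by rw [pdim_convexHull]; omega) hn

theorem toricG_convexHull (A : Finset V) : toricG (convexHull ℝ (A : Set V)) =
    truncG (coneRank atHeightOne A - 1) (toricH (convexHull ℝ (A : Set V))) := by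
  rw [toricG, relG, ← toricH, pdim_convexHull, pdim_empty, sub_neg_eq_add, add_sub_cancel_right]

theorem coeff_truncG (d : ℤ) (h : ℚ[X]) (k : ℕ) :
    (truncG d h).coeff k = if k ≤ d.toNat / 2 then -((X - 1) * h).coeff k else 0 := by
  simp only [truncG, finsetSum_coeff, coeff_C_mul, coeff_X_pow, mul_ite, mul_one, mul_zero,
    Finset.sum_ite_eq, Finset.mem_range, Nat.lt_succ_iff]
  cases k <;> simp [sub_mul, coeff_X_mul]

theorem shiftedH_toricG (hA : A.Nonempty) :
    shiftedH atHeightOne (fun B => toricG (convexHull ℝ (B : Set V))) A =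
      (X - 1) * toricH (convexHull ℝ (A : Set V)) := by
  obtain ⟨n, hn⟩ := Nat.exists_eq_add_of_le'
    (coneRank_pos (isConeFace_atHeightOne_empty A) hA)
  rw [toricH_convexHull hn.le, relHAux_succ_convexHull hA, shiftedH, Finset.mul_sum]
  refine Finset.sum_congr rfl fun B hB => ?_
  have hlt := coneRank_lt_of_mem_properFaces hB
  rw [toricG_convexHull, toricH_convexHull (by omega : coneRank atHeightOne B ≤ n),
    mul_left_comm, ← pow_succ', Nat.sub_add_cancel (by omega)]

theorem isToricG_toricG (S : Finset V) :
    IsToricG atHeightOne S fun A => toricG (convexHull ℝ (A : Set V)) where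
  pointed := isConeFace_atHeightOne_empty S
  empty := by
    rw [toricG_convexHull, toricH_convexHull coneRank_empty.le]
    simp [relHAux, truncG]
  coeff_eq A _ hA k := by
    have hpos := coneRank_pos (isConeFace_atHeightOne_empty A) hA
    rw [toricG_convexHull, coeff_truncG, shiftedH_toricG hA]
    exact if_congr (by omega) rfl rfl

end Polytopes

/-- For every polytope `P` of dimension `d ≥ 2`,
`g₂(P) + f₁(P) - f₀(P) ≥ (d+1)(d-2)/2`. -/
theorem g2_f1_f0_inequality {V : Type*} [AddCommGroup V] [Module ℝ V]
    (P : Set V) (hP : IsPolytope P) (d : ℕ) (hd : 2 ≤ d) (hdim : pdim P = (d : ℤ)) :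
    ((d : ℚ) + 1) * ((d : ℚ) - 2) / 2 ≤
      (toricG P).coeff 2 + ({F : Set V | IsFace P F ∧ pdim F = 1}.ncard : ℚ) -
        ({F : Set V | IsFace P F ∧ pdim F = 0}.ncard : ℚ) := by
  obtain ⟨S, rfl⟩ := hP
  have hrank : coneRank atHeightOne S = d + 1 := by
    rw [pdim_convexHull] at hdim
    omega
  have hbound : (coneRank atHeightOne S : ℚ) * (coneRank atHeightOne S - 3) / 2 ≤
      (toricG (convexHull ℝ (S : Set V))).coeff 2 + #(facesOfRank atHeightOne S 2) -
        #(facesOfRank atHeightOne S 1) := by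
    rcases le_or_gt (coneRank atHeightOne S) 4 with hle | hgt
    · exact (isToricG_toricG S).le_coeff_two_of_coneRank_le_four (by omega) hle
    · exact (isToricG_toricG S).le_coeff_two_of_five_le_coneRank hgt
  have hvertices := ncard_faces_convexHull S 0
  have hedges := ncard_faces_convexHull S 1
  rw [Nat.cast_zero] at hvertices
  rw [Nat.cast_one] at hedges
  rw [hvertices, hedges]
  rw [hrank] at hbound
  push_cast at hbound
  linarith
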